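/- arXiv:1805.11323 — 2 statements merged into one kernel-verified Lean document; each statement's English description precedes it below -/
import Mathlib

section
/- Assume μ = 1 and m = n. Then for generic tuples ū, v̄ of length n the modified scalar product reduces to the ordinary one: ⟨0|( ν_{21}(ū) ν_{12}(v̄) |0⟩ ) = Σ_{ξ̄ ⇒ {ξ̄_I, ξ̄_II}, #ξ̄_I = #ξ̄_II = n} λ_2(ξ̄_I)·λ_1(ξ̄_II)·f(ξ̄_I, ξ̄_II)·K_n(ū | ξ̄_I + c)·\bar{K}_n(ū | ξ̄_II − c), where ξ̄ = {ū, v̄} and the sum runs over all partitions of ξ̄ into two disjoint n-element subtuples. -/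
open scoped BigOperators

noncomputable section

/-- The rational function `g(u,v) = c/(u-v)`. -/
def gC (c u v : ℂ) : ℂ := c / (u - v)

/-- The rational function `f(u,v) = (u-v+c)/(u-v)`. -/
def fC (c u v : ℂ) : ℂ := (u - v + c) / (u - v)

/-- The rational function `h(u,v) = (u-v+c)/c`. -/
def hC (c u v : ℂ) : ℂ := (u - v + c) / c

/-- A family of parameters is generic if all pairwise differences avoid `0, ±c, ±2c`. -/
def Generic (c : ℂ) {ι : Type*} (w : ι → ℂ) : Prop :=
  ∀ i j, i ≠ j → w i - w j ≠ 0 ∧ w i - w j ≠ c ∧ w i - w j ≠ -c ∧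
    w i - w j ≠ 2 * c ∧ w i - w j ≠ -2 * c

/-- The modified Izergin determinant `K^{(z)}(x̄|ȳ)`. -/
def KIz (c z : ℂ) {ι κ : Type*} [Fintype ι] [Fintype κ] [DecidableEq κ]
    (x : ι → ℂ) (y : κ → ℂ) : ℂ :=
  Matrix.det (Matrix.of fun j k : κ =>
    -z * (if j = k then 1 else 0) +
      (∏ i, fC c (x i) (y j)) * (∏ i ∈ Finset.univ.erase j, fC c (y j) (y i))
        / hC c (y j) (y k))

/-- The conjugated modified Izergin determinant: `c` is replaced by `-c`. -/
def KIzBar (c z : ℂ) {ι κ : Type*} [Fintype ι] [Fintype κ] [DecidableEq κ]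
    (x : ι → ℂ) (y : κ → ℂ) : ℂ :=
  KIz (-c) z x y

/-- Restriction of a tuple to a subtuple indexed by a `Finset`. -/
def restr {p : ℕ} (w : Fin p → ℂ) (s : Finset (Fin p)) : {x // x ∈ s} → ℂ :=
  fun i => w i.1

/-- Double product `f(w̄_s, w̄_t)` over two subtuples of a tuple. -/
def fSS (c : ℂ) {p : ℕ} (w : Fin p → ℂ) (s t : Finset (Fin p)) : ℂ :=
  ∏ i ∈ s, ∏ j ∈ t, fC c (w i) (w j)

/-- Ordered product of operators over a subtuple (the operators pairwise commute,
so the order is irrelevant). -/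
def opProd {V : Type*} [AddCommGroup V] [Module ℂ V] {p : ℕ}
    (op : ℂ → Module.End ℂ V) (w : Fin p → ℂ) (s : Finset (Fin p)) : Module.End ℂ V :=
  ((s.sort (· ≤ ·)).map (fun i => op (w i))).prod

/-- The index subsets of a partition of `Fin p` into three parts. -/
def parts {p : ℕ} (σ : Fin p → Fin 3) (k : Fin 3) : Finset (Fin p) :=
  Finset.univ.filter (fun i => σ i = k)

section Helpers

set_option linter.unusedSectionVars false

lemma fC_eq_one_add (c x y : ℂ) (h : x ≠ y) : fC c x y = 1 + gC c x y := by
  have := sub_ne_zero.mpr h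
  unfold fC gC; field_simp

lemma fC_neg (c x y : ℂ) : fC (-c) x y = fC c y x := by
  unfold fC
  rw [← neg_div_neg_eq]
  congr 1 <;> ring

lemma gC_neg (c x y : ℂ) : gC (-c) x y = gC c y x := by
  unfold gC
  rw [← neg_div_neg_eq]
  congr 1 <;> ring

lemma fg_three (c r t a : ℂ) (h1 : r ≠ t) (h2 : a ≠ t) (h3 : r ≠ a) :
    fC c r t * gC c t a + gC c t r * gC c r a = gC c t a * fC c r a := by
  have e1 := sub_ne_zero.mpr h1
  have e2 := sub_ne_zero.mpr h2.symm
  have e3 := sub_ne_zero.mpr h3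
  have e4 := sub_ne_zero.mpr h1.symm
  unfold fC gC
  rw [show t - r = -(r - t) by ring]
  field_simp
  ring

variable {ι : Type*} [DecidableEq ι]

/-- double product of `f` -/
def FF (c : ℂ) (w : ι → ℂ) (S T : Finset ι) : ℂ := ∏ i ∈ S, ∏ j ∈ T, fC c (w i) (w j)

lemma FF_insert_left (c : ℂ) (w : ι → ℂ) {S T : Finset ι} {a : ι} (h : a ∉ S) :
    FF c w (insert a S) T = FF c w {a} T * FF c w S T := by
  simp [FF, Finset.prod_insert h]

lemma FF_insert_right (c : ℂ) (w : ι → ℂ) {S T : Finset ι} {a : ι} (h : a ∉ T) :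
    FF c w S (insert a T) = FF c w S {a} * FF c w S T := by
  simp [FF, Finset.prod_insert h, Finset.prod_mul_distrib]

lemma FF_neg (c : ℂ) (w : ι → ℂ) (S T : Finset ι) : FF (-c) w S T = FF c w T S := by
  unfold FF
  rw [Finset.prod_comm]
  simp [fC_neg]

@[simp] lemma FF_empty_left (c : ℂ) (w : ι → ℂ) (T : Finset ι) : FF c w ∅ T = 1 := by simp [FF]
@[simp] lemma FF_empty_right (c : ℂ) (w : ι → ℂ) (T : Finset ι) : FF c w T ∅ = 1 := by simp [FF]
lemma FF_single (c : ℂ) (w : ι → ℂ) (a b : ι) : FF c w {a} {b} = fC c (w a) (w b) := by simp [FF]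
lemma FF_single_right (c : ℂ) (w : ι → ℂ) (S : Finset ι) (b : ι) :
    FF c w S {b} = ∏ i ∈ S, fC c (w i) (w b) := by simp [FF]
lemma FF_single_left (c : ℂ) (w : ι → ℂ) (S : Finset ι) (b : ι) :
    FF c w {b} S = ∏ i ∈ S, fC c (w b) (w i) := by simp [FF]

/-- partial fractions -/
lemma partial_frac (c : ℂ) (w : ι → ℂ) (hw : Function.Injective w) (R : Finset ι) :
    ∀ t : ℂ, (∀ a ∈ R, w a ≠ t) →
    ∏ a ∈ R, fC c (w a) t = 1 + ∑ a ∈ R, gC c (w a) t * FF c w (R.erase a) {a} := by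
  induction R using Finset.induction_on with
  | empty => simp
  | insert r R hr ih =>
    intro t ht
    have ht' : ∀ a ∈ R, w a ≠ t := fun a ha => ht a (Finset.mem_insert_of_mem ha)
    have hrt : w r ≠ t := ht r (Finset.mem_insert_self _ _)
    have hra : ∀ a ∈ R, w a ≠ w r := fun a ha h => hr (hw h ▸ ha)
    have ih1 := ih t ht'
    have ih2 := ih (w r) hra
    rw [Finset.prod_insert hr, Finset.sum_insert hr, Finset.erase_insert hr, ih1,
      FF_single_right, ih2]
    have : ∀ a ∈ R, gC c (w a) t * FF c w ((insert r R).erase a) {a}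
        = fC c (w r) t * (gC c (w a) t * FF c w (R.erase a) {a})
          - gC c (w r) t * (gC c (w a) (w r) * FF c w (R.erase a) {a}) := by
      intro a ha
      have hne : r ≠ a := fun h => hr (h ▸ ha)
      rw [Finset.erase_insert_of_ne hne, FF_insert_left _ _ (by simp [hr]), FF_single]
      have := fg_three c (w r) t (w a) hrt (ht' a ha) (hra a ha).symm
      have e1 : gC c t (w a) = - gC c (w a) t := by
        unfold gC; rw [← neg_sub, div_neg]
      have e2 : gC c t (w r) = - gC c (w r) t := by
        unfold gC; rw [← neg_sub, div_neg]
      have e3 : gC c (w r) (w a) = - gC c (w a) (w r) := by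
        unfold gC; rw [← neg_sub, div_neg]
      rw [e1, e2, e3] at this
      linear_combination FF c w (R.erase a) {a} * this
    rw [Finset.sum_congr rfl this, Finset.sum_sub_distrib, ← Finset.mul_sum, ← Finset.mul_sum,
      fC_eq_one_add c _ _ hrt]
    ring

/-- pairwise genericity, weak form used below -/
def WG (c : ℂ) (w : ι → ℂ) : Prop := ∀ i j, w i - w j + c ≠ 0

lemma lemmaA (c : ℂ) (hc : c ≠ 0) (w : ι → ℂ) (hw : Function.Injective w) (hg : WG c w)
    (R : Finset ι) (τ : ℂ) (hτ : ∀ a ∈ R, w a ≠ τ) :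
    ∑ a ∈ R, gC c τ (w a) * (∏ b ∈ R.erase a, fC c τ (w b)) * FF c w (R.erase a) {a}
      = (∏ b ∈ R, fC c τ (w b)) - 1 := by
  by_cases h : ∃ r ∈ R, τ = w r - c
  · obtain ⟨r, hr, rfl⟩ := h
    have h0 : fC c (w r - c) (w r) = 0 := by simp [fC]
    rw [Finset.prod_eq_zero hr h0, Finset.sum_eq_single_of_mem r hr]
    · rw [mul_assoc, FF_single_right, ← Finset.prod_mul_distrib]
      rw [Finset.prod_eq_one]
      · simp [gC, hc]
      · intro b hb
        have hbr : w b ≠ w r := fun h => (Finset.ne_of_mem_erase hb) (hw h)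
        have e1 := hg b r
        have e2 := sub_ne_zero.mpr hbr
        have e3 := sub_ne_zero.mpr hbr.symm
        have e4 : w r - c - w b ≠ 0 := by
          intro h; apply e1; linear_combination -h
        unfold fC
        field_simp
        ring
    · intro b hb hbr
      rw [Finset.prod_eq_zero (Finset.mem_erase.mpr ⟨hbr.symm, hr⟩) h0]
      simp
  · push Not at h
    have hne : ∀ a ∈ R, τ - w a + c ≠ 0 := by
      intro a ha h'
      exact h a ha (by linear_combination h')
    have hp := partial_frac c w hw R (τ + c) (by
      intro a ha h'
      exact h a ha (by rw [h']; ring))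
    have hinv : ∀ a ∈ R, fC c τ (w a) * fC c (w a) (τ + c) = 1 := by
      intro a ha
      have e1 := hne a ha
      have e2 := sub_ne_zero.mpr (hτ a ha).symm
      have e3 : w a - (τ + c) ≠ 0 := by
        intro h; apply e1; linear_combination -h
      unfold fC
      field_simp
      ring
    have hpr : (∏ b ∈ R, fC c τ (w b)) * ∏ a ∈ R, fC c (w a) (τ + c) = 1 := by
      rw [← Finset.prod_mul_distrib]
      exact Finset.prod_eq_one hinv
    have hterm : ∀ a ∈ R, gC c τ (w a) * (∏ b ∈ R.erase a, fC c τ (w b)) * FF c w (R.erase a) {a}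
        = -((∏ b ∈ R, fC c τ (w b)) * (gC c (w a) (τ + c) * FF c w (R.erase a) {a})) := by
      intro a ha
      rw [← Finset.mul_prod_erase R _ ha]
      have e1 := hne a ha
      have e2 := sub_ne_zero.mpr (hτ a ha).symm
      have e3 : w a - (τ + c) ≠ 0 := by
        intro h; apply e1; linear_combination -h
      have : gC c τ (w a) = - (fC c τ (w a) * gC c (w a) (τ + c)) := by
        unfold fC gC
        field_simp
        ring
      rw [this]; ring
    rw [Finset.sum_congr rfl hterm, Finset.sum_neg_distrib, ← Finset.mul_sum]
    rw [hp] at hpr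
    linear_combination -hpr

/-- subset sum form of the Izergin determinant -/
def KS (c : ℂ) (w : ι → ℂ) (φ : ι → ℂ) (Y : Finset ι) : ℂ :=
  ∑ S ∈ Y.powerset, (-1) ^ (Y \ S).card * (∏ s ∈ S, φ s) * FF c w S (Y \ S)

lemma KS_one (c : ℂ) (w : ι → ℂ) (hw : Function.Injective w) (Y : Finset ι) (hY : Y.Nonempty) :
    KS c w (fun _ => 1) Y = 0 := by
  obtain ⟨y, hy⟩ := hY
  obtain ⟨Z, hyZ, rfl⟩ : ∃ Z, y ∉ Z ∧ Y = insert y Z :=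
    ⟨Y.erase y, by simp, by simp [Finset.insert_erase hy]⟩
  unfold KS
  rw [Finset.sum_powerset_insert hyZ, ← Finset.sum_add_distrib]
  have hterm : ∀ S ∈ Z.powerset,
      (-1 : ℂ) ^ (insert y Z \ S).card * (∏ s ∈ S, (fun _ => (1 : ℂ)) s) * FF c w S (insert y Z \ S)
      + (-1) ^ (insert y Z \ insert y S).card * (∏ s ∈ insert y S, (fun _ => (1 : ℂ)) s)
        * FF c w (insert y S) (insert y Z \ insert y S)
      = ∑ a ∈ Z, (-1) ^ (Z \ S).card * FF c w S (Z \ S) *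
          (if a ∈ S then gC c (w y) (w a) * FF c w (S.erase a) {a}
            else gC c (w y) (w a) * FF c w {a} ((Z \ S).erase a)) := by
    intro S hS
    have hSZ := Finset.mem_powerset.mp hS
    have hyS : y ∉ S := fun h => hyZ (hSZ h)
    have e1 : insert y Z \ S = insert y (Z \ S) := by
      rw [Finset.insert_sdiff_of_notMem _ hyS]
    have e2 : insert y Z \ insert y S = Z \ S := by
      ext x; simp only [Finset.mem_sdiff, Finset.mem_insert]; 
      constructor
      · rintro ⟨h1, h2⟩; push Not at h2; exact ⟨h1.resolve_left h2.1, h2.2⟩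
      · rintro ⟨h1, h2⟩; exact ⟨Or.inr h1, by rintro (h | h); exacts [hyZ (h ▸ h1), h2 h]⟩
    have hyZS : y ∉ Z \ S := fun h => hyZ (Finset.mem_sdiff.mp h).1
    rw [e1, e2, FF_insert_left c w hyS, FF_insert_right c w hyZS, Finset.card_insert_of_notMem hyZS]
    simp only [Finset.prod_const_one]
    have p1 := partial_frac c w hw S (w y) (fun a ha h => hyS (hw h ▸ ha))
    have p2 := partial_frac (-c) w hw (Z \ S) (w y) (fun a ha h => hyZS (hw h ▸ ha))
    rw [FF_single_right, p1, FF_single_left]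
    simp only [fC_neg, gC_neg, FF_neg] at p2
    rw [p2, ← Finset.mul_sum]
    have : ∑ a ∈ Z, (if a ∈ S then gC c (w y) (w a) * FF c w (S.erase a) {a}
            else gC c (w y) (w a) * FF c w {a} ((Z \ S).erase a))
        = - ∑ a ∈ S, gC c (w a) (w y) * FF c w (S.erase a) {a} +
          ∑ a ∈ Z \ S, gC c (w y) (w a) * FF c w {a} ((Z \ S).erase a) := by
      rw [← Finset.sum_sdiff hSZ, add_comm, ← Finset.sum_neg_distrib]
      congr 1
      · apply Finset.sum_congr rfl
        intro a ha
        rw [if_pos ha]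
        have : gC c (w y) (w a) = - gC c (w a) (w y) := by
          unfold gC; rw [← neg_sub, div_neg]
        rw [this]; ring
      · apply Finset.sum_congr rfl
        intro a ha
        rw [if_neg (Finset.mem_sdiff.mp ha).2]
    rw [this, pow_succ]
    ring
  rw [Finset.sum_congr rfl hterm, Finset.sum_comm]
  apply Finset.sum_eq_zero
  intro a ha
  obtain ⟨X, haX, rfl⟩ : ∃ X, a ∉ X ∧ Z = insert a X :=
    ⟨Z.erase a, by simp, by simp [Finset.insert_erase ha]⟩
  rw [Finset.sum_powerset_insert haX, ← Finset.sum_add_distrib]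
  apply Finset.sum_eq_zero
  intro S hS
  have hSX := Finset.mem_powerset.mp hS
  have haS : a ∉ S := fun h => haX (hSX h)
  have e1 : insert a X \ S = insert a (X \ S) := by
    rw [Finset.insert_sdiff_of_notMem _ haS]
  have e2 : insert a X \ insert a S = X \ S := by
    ext x; simp only [Finset.mem_sdiff, Finset.mem_insert]; 
    constructor
    · rintro ⟨h1, h2⟩; push Not at h2; exact ⟨h1.resolve_left h2.1, h2.2⟩
    · rintro ⟨h1, h2⟩; exact ⟨Or.inr h1, by rintro (h | h); exacts [haX (h ▸ h1), h2 h]⟩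
  have haXS : a ∉ X \ S := fun h => haX (Finset.mem_sdiff.mp h).1
  rw [e1, e2, if_neg haS, if_pos (Finset.mem_insert_self _ _), Finset.erase_insert haXS,
    Finset.erase_insert haS, FF_insert_left c w haS, FF_insert_right c w haXS,
    Finset.card_insert_of_notMem haXS, pow_succ]
  ring

lemma KS_rec (c : ℂ) (hc : c ≠ 0) (w : ι → ℂ) (hw : Function.Injective w) (hg : WG c w)
    (φ : ι → ℂ) (τ : ℂ) (Y : Finset ι) (hτ : ∀ a ∈ Y, w a ≠ τ) :
    KS c w (fun a => fC c τ (w a) * φ a) Y = (∏ a ∈ Y, fC c τ (w a)) * KS c w φ Y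
      + ∑ a ∈ Y, gC c τ (w a) * (∏ b ∈ Y.erase a, fC c τ (w b)) * FF c w (Y.erase a) {a}
          * KS c w φ (Y.erase a) := by
  have hsum : ∑ a ∈ Y, gC c τ (w a) * (∏ b ∈ Y.erase a, fC c τ (w b)) * FF c w (Y.erase a) {a}
          * KS c w φ (Y.erase a)
      = ∑ S ∈ Y.powerset, ∑ a ∈ Y \ S, gC c τ (w a) * (∏ b ∈ Y.erase a, fC c τ (w b))
          * FF c w (Y.erase a) {a} *
          ((-1) ^ ((Y.erase a) \ S).card * (∏ s ∈ S, φ s) * FF c w S ((Y.erase a) \ S)) := by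
    unfold KS
    simp only [Finset.mul_sum]
    apply Finset.sum_comm'
    intro a S
    simp only [Finset.mem_powerset, Finset.mem_sdiff]
    constructor
    · rintro ⟨h1, h2⟩
      exact ⟨⟨h1, fun h => by simpa using h2 h⟩, h2.trans (Finset.erase_subset _ _)⟩
    · rintro ⟨⟨h1, h2⟩, h3⟩
      exact ⟨h1, fun x hx => Finset.mem_erase.mpr ⟨fun h => h2 (h ▸ hx), h3 hx⟩⟩
  rw [hsum]
  unfold KS
  rw [Finset.mul_sum, ← Finset.sum_add_distrib]
  apply Finset.sum_congr rfl
  intro S hS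
  have hSY := Finset.mem_powerset.mp hS
  have hA := lemmaA c hc w hw hg (Y \ S) τ (fun a ha => hτ a (Finset.mem_sdiff.mp ha).1)
  have hterm : ∀ a ∈ Y \ S, gC c τ (w a) * (∏ b ∈ Y.erase a, fC c τ (w b))
          * FF c w (Y.erase a) {a} *
          ((-1) ^ ((Y.erase a) \ S).card * (∏ s ∈ S, φ s) * FF c w S ((Y.erase a) \ S))
      = -((-1) ^ (Y \ S).card * (∏ s ∈ S, φ s) * FF c w S (Y \ S) * (∏ b ∈ S, fC c τ (w b))) *
        (gC c τ (w a) * (∏ b ∈ (Y \ S).erase a, fC c τ (w b)) * FF c w ((Y \ S).erase a) {a}) := by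
    intro a ha
    obtain ⟨haY, haS⟩ := Finset.mem_sdiff.mp ha
    have e1 : Y.erase a \ S = (Y \ S).erase a := by
      ext x; simp; tauto
    have hsub : S ⊆ Y.erase a := fun x hx => Finset.mem_erase.mpr ⟨fun h => haS (h ▸ hx), hSY hx⟩
    have e2 : FF c w (Y.erase a) {a} = FF c w ((Y \ S).erase a) {a} * FF c w S {a} := by
      simp only [FF_single_right]
      rw [← e1, Finset.prod_sdiff hsub]
    have e3 : ∏ b ∈ Y.erase a, fC c τ (w b)
        = (∏ b ∈ (Y \ S).erase a, fC c τ (w b)) * ∏ b ∈ S, fC c τ (w b) := by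
      rw [← e1, Finset.prod_sdiff hsub]
    have e4 : FF c w S (Y \ S) = FF c w S {a} * FF c w S ((Y \ S).erase a) := by
      conv_lhs => rw [← Finset.insert_erase ha]
      exact FF_insert_right c w (by simp)
    have e5 : (-1 : ℂ) ^ (Y \ S).card = - (-1) ^ ((Y \ S).erase a).card := by
      rw [← Finset.card_erase_add_one ha, pow_succ]; ring
    rw [e1, e2, e3, e4, e5]
    ring
  rw [Finset.sum_congr rfl hterm, ← Finset.mul_sum, hA, Finset.prod_mul_distrib,
    ← Finset.prod_sdiff hSY]
  ring

/-- vanishing and recursion for products `φ = ∏ f(τ_i, ·)` -/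
lemma KS_vanish (c : ℂ) (hc : c ≠ 0) (w : ι → ℂ) (hw : Function.Injective w) (hg : WG c w)
    (l : List ℂ) : ∀ (Y : Finset ι), (∀ τ ∈ l, ∀ a ∈ Y, w a ≠ τ) → l.length < Y.card →
    KS c w (fun a => (l.map (fun τ => fC c τ (w a))).prod) Y = 0 := by
  induction l with
  | nil =>
    intro Y _ h
    simpa using KS_one c w hw Y (Finset.card_pos.mp (by simpa using h))
  | cons τ l ih =>
    intro Y hY h
    simp only [List.map_cons, List.prod_cons]
    rw [KS_rec c hc w hw hg _ τ Y (hY τ (by simp)), ih Y (fun σ hσ => hY σ (by simp [hσ]))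
      (by simp at h; omega), mul_zero, zero_add]
    apply Finset.sum_eq_zero
    intro a ha
    rw [ih (Y.erase a), mul_zero]
    · intro σ hσ b hb
      exact hY σ (by simp [hσ]) b (Finset.mem_of_mem_erase hb)
    · rw [Finset.card_erase_of_mem ha]; simp at h; omega

lemma KS_rec' (c : ℂ) (hc : c ≠ 0) (w : ι → ℂ) (hw : Function.Injective w) (hg : WG c w)
    (τ : ℂ) (l : List ℂ) (Y : Finset ι) (hY : ∀ σ ∈ τ :: l, ∀ a ∈ Y, w a ≠ σ)
    (hcard : Y.card = l.length + 1) :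
    KS c w (fun a => ((τ :: l).map (fun τ => fC c τ (w a))).prod) Y
      = ∑ a ∈ Y, gC c τ (w a) * (∏ b ∈ Y.erase a, fC c τ (w b)) * FF c w (Y.erase a) {a}
          * KS c w (fun a => (l.map (fun τ => fC c τ (w a))).prod) (Y.erase a) := by
  simp only [List.map_cons, List.prod_cons]
  rw [KS_rec c hc w hw hg _ τ Y (hY τ (by simp)),
    KS_vanish c hc w hw hg l Y (fun σ hσ => hY σ (by simp [hσ])) (by omega), mul_zero, zero_add]

lemma cauchy_det (c : ℂ) (hc : c ≠ 0) (κ : Type) [Fintype κ] :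
    ∀ [DecidableEq κ] (y : κ → ℂ), (∀ j k, y j - y k + c ≠ 0) →
    Matrix.det (Matrix.of fun j k : κ => c / (y j - y k + c))
      = ∏ j, ∏ k, if j = k then 1 else (y j - y k) / (y j - y k + c) := by
  refine Fintype.induction_empty_option (P := fun κ _ => ∀ [DecidableEq κ] (y : κ → ℂ),
    (∀ j k, y j - y k + c ≠ 0) →
    Matrix.det (Matrix.of fun j k : κ => c / (y j - y k + c))
      = ∏ j, ∏ k, if j = k then 1 else (y j - y k) / (y j - y k + c)) ?_ ?_ ?_ κ
  · intro α β _ e ih _ y hy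
    let _ : Fintype α := Fintype.ofEquiv β e.symm
    classical
    have := ih (y ∘ e) (fun j k => hy _ _)
    rw [← Matrix.det_submatrix_equiv_self e]
    rw [← e.prod_comp]
    simp_rw [← e.prod_comp (fun k => if _ = k then (1 : ℂ) else _)]
    simpa [Matrix.submatrix] using this
  · intro _ y _; simp
  · intro α _ ih _ y hy
    classical
    let y' : α → ℂ := fun a => y (some a)
    let y0 := y none
    let P : α → ℂ := fun j => (y' j - y0) / (y' j - y0 + c)
    let Q : α → ℂ := fun k => (y0 - y' k) / (y0 - y' k + c)
    have ih' := ih y' (fun j k => hy _ _)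
    let e : Unit ⊕ α ≃ Option α := (Equiv.sumComm _ _).trans (Equiv.optionEquivSumPUnit α).symm
    rw [← Matrix.det_submatrix_equiv_self e]
    have hM : (Matrix.of fun j k : Option α => c / (y j - y k + c)).submatrix e e
        = Matrix.fromBlocks (1 : Matrix Unit Unit ℂ)
            (Matrix.of fun _ k => c / (y0 - y' k + c))
            (Matrix.of fun j _ => c / (y' j - y0 + c))
            (Matrix.of fun j k => c / (y' j - y' k + c)) := by
      ext i j
      rcases i with i | i <;> rcases j with j | j <;> simp [e, y0, y', hc]
    rw [hM, Matrix.det_fromBlocks_one₁₁]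
    have hS : (Matrix.of fun j k => c / (y' j - y' k + c)) -
        (Matrix.of fun (j : α) (_ : Unit) => c / (y' j - y0 + c)) *
          (Matrix.of fun (_ : Unit) k => c / (y0 - y' k + c))
        = Matrix.diagonal P * (Matrix.of fun j k => c / (y' j - y' k + c)) * Matrix.diagonal Q := by
      ext j k
      rw [Matrix.mul_diagonal, Matrix.diagonal_mul]
      simp only [Matrix.sub_apply, Matrix.mul_apply,
        Matrix.of_apply, Finset.univ_unique, Finset.sum_singleton, P, Q]
      have e1 := hy (some j) (some k)
      have e2 := hy (some j) none
      have e3 := hy none (some k)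
      change y' j - y' k + c ≠ 0 at e1
      change y' j - y0 + c ≠ 0 at e2
      change y0 - y' k + c ≠ 0 at e3
      field_simp
      ring
    rw [hS, Matrix.det_mul, Matrix.det_mul, Matrix.det_diagonal, Matrix.det_diagonal, ih']
    simp only [Fintype.prod_option, if_true, one_mul, reduceCtorEq, if_false, Option.some.injEq]
    rw [Finset.prod_mul_distrib]
    ring

lemma det_principal {κ : Type} [Fintype κ] [DecidableEq κ] (d : κ → ℂ) (M : κ → κ → ℂ) :
    Matrix.det (Matrix.of fun j k : κ => -1 * (if j = k then 1 else 0) + d j * M j k)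
      = ∑ S : Finset κ, (-1) ^ (Sᶜ).card * (∏ j ∈ S, d j) *
          Matrix.det (Matrix.of fun j k : {x // x ∈ S} => M j k) := by
  have h2 := (Matrix.detRowAlternating (n := κ) (R := ℂ)).map_add_univ
    (fun j k => d j * M j k) (fun j k => -1 * (if j = k then (1 : ℂ) else 0))
  have h1 : Matrix.det (Matrix.of fun j k : κ => -1 * (if j = k then 1 else 0) + d j * M j k)
      = Matrix.detRowAlternating ((fun j k => d j * M j k) +
          (fun j k => -1 * (if j = k then (1 : ℂ) else 0))) := by
    change Matrix.det _ = Matrix.det _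
    congr 1
    ext j k
    exact add_comm _ _
  rw [h1, h2]
  apply Finset.sum_congr rfl
  intro S _
  have h3 : Matrix.detRowAlternating (S.piecewise (fun j k => d j * M j k)
        (fun j k => -1 * (if j = k then (1 : ℂ) else 0)))
      = Matrix.det (Matrix.of fun j k => if j ∈ S then d j * M j k else
          -1 * (if j = k then (1 : ℂ) else 0)) := by
    change Matrix.det _ = Matrix.det _
    congr 1
    funext j k
    simp only [Finset.piecewise, Matrix.of_apply]
    by_cases hj : j ∈ S <;> simp [hj]
  rw [h3, Matrix.twoBlockTriangular_det _ (fun i => i ∈ S)]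
  · have hA : Matrix.toSquareBlockProp (Matrix.of fun j k => if j ∈ S then d j * M j k else
          -1 * (if j = k then (1 : ℂ) else 0)) (fun i => i ∈ S)
        = Matrix.of fun j k : {x // x ∈ S} =>
          d j * (Matrix.of fun j k : {x // x ∈ S} => M j k) j k := by
      ext j k
      simp [Matrix.toSquareBlockProp, j.2]
    have hB : Matrix.toSquareBlockProp (Matrix.of fun j k => if j ∈ S then d j * M j k else
          -1 * (if j = k then (1 : ℂ) else 0)) (fun i => ¬ i ∈ S)
        = Matrix.diagonal (fun _ => -1) := by
      ext j k
      simp [Matrix.toSquareBlockProp, j.2, Matrix.diagonal_apply, Subtype.ext_iff]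
    have e : Subtype.fintype (fun i => i ∈ S) = Finset.Subtype.fintype S := Subsingleton.elim _ _
    rw [hA, hB, e, Matrix.det_mul_column, Matrix.det_diagonal]
    simp only [Finset.prod_const, Finset.card_univ]
    have : Fintype.card {a // a ∉ S} = Sᶜ.card := by
      rw [Fintype.card_subtype]; congr 1; ext; simp
    rw [this, Finset.prod_coe_sort S d]
    ring
  · intro i hi j hj
    have : i ≠ j := fun h => hi (h ▸ hj)
    simp [hi, this]

lemma KIz_eq_sum (c : ℂ) (hc : c ≠ 0) {ι' κ : Type} [Fintype ι'] [Fintype κ] [DecidableEq κ]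
    (x : ι' → ℂ) (y : κ → ℂ) (hy : ∀ j k, y j - y k + c ≠ 0) (hinj : Function.Injective y) :
    KIz c 1 x y = KS c y (fun a => ∏ i, fC c (x i) (y a)) Finset.univ := by
  unfold KIz KS
  have h1 : (Matrix.of fun j k : κ =>
    -1 * (if j = k then 1 else 0) +
      (∏ i, fC c (x i) (y j)) * (∏ i ∈ Finset.univ.erase j, fC c (y j) (y i))
        / hC c (y j) (y k)) = Matrix.of fun j k : κ =>
    -1 * (if j = k then 1 else 0) +
      ((∏ i, fC c (x i) (y j)) * (∏ i ∈ Finset.univ.erase j, fC c (y j) (y i)))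
        * (fun j k => c / (y j - y k + c)) j k := by
    ext j k
    simp only [Matrix.of_apply, hC]
    rw [div_div_eq_mul_div, mul_div_assoc]
  rw [h1, det_principal, Finset.powerset_univ]
  apply Finset.sum_congr rfl
  intro S _
  have h2 := cauchy_det c hc {x // x ∈ S} (fun j => y j.1) (fun j k => hy _ _)
  rw [h2, Finset.prod_mul_distrib]
  have h3 : (∏ j : {x // x ∈ S}, ∏ k : {x // x ∈ S}, if j = k then (1 : ℂ) else
      (y j - y k) / (y j - y k + c)) = ∏ j ∈ S, ∏ k ∈ S.erase j, (fC c (y j) (y k))⁻¹ := by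
    rw [← Finset.prod_coe_sort S (fun j => ∏ k ∈ S.erase j, (fC c (y j) (y k))⁻¹)]
    apply Finset.prod_congr rfl
    intro j _
    have : ∏ k ∈ S.erase j, (fC c (y j) (y k))⁻¹
        = ∏ k ∈ S, if j.1 = k then 1 else (fC c (y j) (y k))⁻¹ := by
      rw [← Finset.mul_prod_erase S _ j.2, if_pos rfl, one_mul]
      apply Finset.prod_congr rfl
      intro k hk
      rw [if_neg (Finset.ne_of_mem_erase hk).symm]
    rw [this, ← Finset.prod_coe_sort S (fun k => if j.1 = k then 1 else (fC c (y j) (y k))⁻¹)]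
    apply Finset.prod_congr rfl
    intro k _
    simp only [Subtype.ext_iff, fC, inv_div]
  have h4 : (∏ j ∈ S, ∏ i ∈ Finset.univ.erase j, fC c (y j) (y i)) *
      (∏ j ∈ S, ∏ k ∈ S.erase j, (fC c (y j) (y k))⁻¹) = FF c y S Sᶜ := by
    unfold FF
    rw [← Finset.prod_mul_distrib]
    apply Finset.prod_congr rfl
    intro j hj
    have hsub : S.erase j ⊆ Finset.univ.erase j := Finset.erase_subset_erase _ (Finset.subset_univ _)
    have hd : Finset.univ.erase j \ S.erase j = Sᶜ := by
      ext k; simp only [Finset.mem_sdiff, Finset.mem_erase, Finset.mem_univ, and_true, Finset.mem_compl, not_and]; constructor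
      · rintro ⟨h1, h2⟩; exact h2 h1
      · intro h; exact ⟨fun h' => h (h' ▸ hj), fun _ => h⟩
    rw [← Finset.prod_sdiff hsub, hd, mul_assoc, ← Finset.prod_mul_distrib]
    refine (congrArg _ (Finset.prod_eq_one ?_)).trans (mul_one _)
    intro k hk
    apply mul_inv_cancel₀
    unfold fC
    apply div_ne_zero (hy _ _)
    exact sub_ne_zero.mpr (fun h => (Finset.ne_of_mem_erase hk).symm (hinj h))
  rw [h3, ← Finset.compl_eq_univ_sdiff, ← h4]
  ring

lemma KIz_restr (c : ℂ) (hc : c ≠ 0) {ι' : Type} [Fintype ι'] {p : ℕ} (x : ι' → ℂ)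
    (w : Fin p → ℂ) (hw : Function.Injective w) (hg : WG c w) (s : Finset (Fin p)) :
    KIz c 1 x (fun i => restr w s i + c) = KS c w (fun a => ∏ i, fC c (x i - c) (w a)) s := by
  rw [KIz_eq_sum c hc]
  · unfold KS
    rw [Finset.powerset_univ]
    refine Finset.sum_bij (fun S _ => S.map (Function.Embedding.subtype _)) ?_ ?_ ?_ ?_
    · intro S _
      rw [Finset.mem_powerset]
      intro a ha
      simp at ha
      exact ha.1
    · intro S _ T _ h
      exact Finset.map_injective _ h
    · intro T hT
      rw [Finset.mem_powerset] at hT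
      exact ⟨T.subtype (· ∈ s), Finset.mem_univ _, by
        rw [Finset.subtype_map]; ext a; simp; exact fun h => hT h⟩
    · intro S _
      have hd : s \ S.map (Function.Embedding.subtype _) = (Sᶜ).map (Function.Embedding.subtype _) := by
        ext a; simp
        constructor
        · rintro ⟨h1, h2⟩; exact ⟨h1, h2 h1⟩
        · rintro ⟨h1, h2⟩; exact ⟨h1, fun _ => h2⟩
      rw [hd, ← Finset.compl_eq_univ_sdiff, Finset.card_map, Finset.prod_map]
      unfold FF
      simp only [Finset.prod_map]
      congr 2
      · apply Finset.prod_congr rfl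
        intro a _
        apply Finset.prod_congr rfl
        intro i _
        simp only [fC, restr, Function.Embedding.subtype_apply]
        congr 1 <;> ring
      · ext a
        apply Finset.prod_congr rfl
        intro i _
        simp only [fC, restr, Function.Embedding.subtype_apply]
        congr 1 <;> ring
  · intro j k
    have := hg j.1 k.1
    simpa [restr] using this
  · intro j k h
    simp [restr] at h
    exact Subtype.ext (hw h)

section Reindex

variable {M : Type*} [AddCommMonoid M]

lemma reindex_one (X : Finset ι) (k : ℕ) (F : Finset ι → ι → M) :
    ∑ I ∈ X.powersetCard k, ∑ a ∈ X \ I, F I a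
      = ∑ I ∈ X.powersetCard (k + 1), ∑ a ∈ I, F (I.erase a) a := by
  rw [Finset.sum_sigma', Finset.sum_sigma']
  refine Finset.sum_bij' (fun p _ => ⟨insert p.2 p.1, p.2⟩) (fun p _ => ⟨p.1.erase p.2, p.2⟩)
    ?_ ?_ ?_ ?_ ?_
  · rintro ⟨I, a⟩ h
    simp only [Finset.mem_sigma, Finset.mem_powersetCard, Finset.mem_sdiff] at h ⊢
    obtain ⟨⟨h1, h2⟩, h3, h4⟩ := h
    exact ⟨⟨Finset.insert_subset h3 h1, by rw [Finset.card_insert_of_notMem h4, h2]⟩,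
      Finset.mem_insert_self _ _⟩
  · rintro ⟨I, a⟩ h
    simp only [Finset.mem_sigma, Finset.mem_powersetCard, Finset.mem_sdiff] at h ⊢
    obtain ⟨⟨h1, h2⟩, h3⟩ := h
    exact ⟨⟨(Finset.erase_subset _ _).trans h1, by rw [Finset.card_erase_of_mem h3, h2]; rfl⟩,
      h1 h3, by simp⟩
  · rintro ⟨I, a⟩ h
    simp only [Finset.mem_sigma, Finset.mem_sdiff] at h
    simp [Finset.erase_insert h.2.2]
  · rintro ⟨I, a⟩ h
    simp only [Finset.mem_sigma] at h
    simp [Finset.insert_erase h.2]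
  · rintro ⟨I, a⟩ h
    simp only [Finset.mem_sigma, Finset.mem_sdiff] at h
    simp [Finset.erase_insert h.2.2]

lemma reindex_two (X : Finset ι) (k : ℕ) (F : Finset ι → Finset ι → ι → ι → M) :
    ∑ I ∈ X.powersetCard k, ∑ J ∈ (X \ I).powersetCard k, ∑ a ∈ (X \ I) \ J,
      ∑ e ∈ ((X \ I) \ J).erase a, F I J a e
      = ∑ I ∈ X.powersetCard (k + 1), ∑ J ∈ (X \ I).powersetCard (k + 1), ∑ a ∈ I,
          ∑ e ∈ J, F (I.erase a) (J.erase e) a e := by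
  have h1 : ∀ I ∈ X.powersetCard k, ∑ J ∈ (X \ I).powersetCard k, ∑ a ∈ (X \ I) \ J,
      ∑ e ∈ ((X \ I) \ J).erase a, F I J a e
      = ∑ a ∈ X \ I, ∑ J ∈ ((X \ I).erase a).powersetCard (k + 1), ∑ e ∈ J,
          F I (J.erase e) a e := by
    intro I _
    have : ∑ J ∈ (X \ I).powersetCard k, ∑ a ∈ (X \ I) \ J,
      ∑ e ∈ ((X \ I) \ J).erase a, F I J a e
      = ∑ a ∈ X \ I, ∑ J ∈ ((X \ I).erase a).powersetCard k,
          ∑ e ∈ ((X \ I) \ J).erase a, F I J a e := by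
      apply Finset.sum_comm'
      intro J a
      generalize X \ I = Y
      simp only [Finset.mem_powersetCard, Finset.mem_sdiff]
      constructor
      · rintro ⟨⟨h1, h2⟩, h3, h4⟩
        exact ⟨⟨fun x hx => Finset.mem_erase.mpr ⟨fun h => h4 (h ▸ hx), h1 hx⟩, h2⟩, h3⟩
      · rintro ⟨⟨h1, h2⟩, h3⟩
        exact ⟨⟨h1.trans (Finset.erase_subset _ _), h2⟩, h3, fun h => by simpa using h1 h⟩
    rw [this]
    apply Finset.sum_congr rfl
    intro a _
    rw [← reindex_one ((X \ I).erase a) k (fun J e => F I J a e)]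
    apply Finset.sum_congr rfl
    intro J _
    have : ((X \ I) \ J).erase a = (X \ I).erase a \ J := by
      ext x; simp only [Finset.mem_erase, Finset.mem_sdiff]; tauto
    rw [this]
  rw [Finset.sum_congr rfl h1,
    reindex_one X k (fun I a => ∑ J ∈ ((X \ I).erase a).powersetCard (k + 1), ∑ e ∈ J,
          F I (J.erase e) a e)]
  apply Finset.sum_congr rfl
  intro I hI
  have hIX := (Finset.mem_powersetCard.mp hI).1
  rw [Finset.sum_comm]
  apply Finset.sum_congr rfl
  intro a ha
  have : (X \ I.erase a).erase a = X \ I := by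
    ext x; simp only [Finset.mem_erase, Finset.mem_sdiff]
    constructor
    · rintro ⟨h1, h2, h3⟩; exact ⟨h2, fun h => h3 ⟨h1, h⟩⟩
    · rintro ⟨h1, h2⟩; exact ⟨fun h => h2 (h ▸ ha), h1, fun h => h2 h.2⟩
  rw [this]

end Reindex

section Action

variable {V : Type*} [AddCommGroup V] [Module ℂ V]

lemma action (c : ℂ) (hc : c ≠ 0) (w : ι → ℂ) (hw : Function.Injective w) (hg : WG c w)
    (X B : ι → Module.End ℂ V) (b : Finset ι → V) (lam : ι → ℂ)
    (hXB : ∀ t a, t ≠ a → ∀ x, X t (B a x)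
      = fC c (w a) (w t) • B a (X t x) + gC c (w t) (w a) • B t (X a x))
    (hX0 : ∀ t, X t (b ∅) = lam t • b ∅)
    (hbi : ∀ a S, a ∉ S → b (insert a S) = B a (b S)) (S : Finset ι) :
    ∀ t, t ∉ S → X t (b S) = ∑ a ∈ insert t S,
      (lam a * (c / (w t - w a + c)) * FF c w ((insert t S).erase a) {a}) •
        b ((insert t S).erase a) := by
  induction S using Finset.induction_on with
  | empty => intro t _; simp [hX0, hc]
  | insert r S hr ih =>
    intro t ht
    have htr : t ≠ r := fun h => ht (h ▸ Finset.mem_insert_self _ _)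
    have htS : t ∉ S := fun h => ht (Finset.mem_insert_of_mem h)
    rw [hbi r S hr, hXB t r htr, ih t htS, ih r hr, Finset.sum_insert ht, Finset.sum_insert hr,
      Finset.sum_insert htS, Finset.sum_insert hr, Finset.erase_insert ht, Finset.erase_insert htS,
      Finset.erase_insert hr]
    have e1 : (insert t (insert r S)).erase r = insert t S := by
      rw [Finset.erase_insert_of_ne htr, Finset.erase_insert hr]
    rw [e1, hbi r S hr, hbi t S htS, FF_insert_left c w hr, FF_insert_left c w htS]
    have hterm : ∀ a ∈ S,
        (lam a * (c / (w t - w a + c)) * FF c w ((insert t (insert r S)).erase a) {a}) •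
          b ((insert t (insert r S)).erase a)
        = fC c (w r) (w t) • B r ((lam a * (c / (w t - w a + c)) * FF c w ((insert t S).erase a) {a}) •
        b ((insert t S).erase a)) + gC c (w t) (w r) •
          B t ((lam a * (c / (w r - w a + c)) * FF c w ((insert r S).erase a) {a}) •
        b ((insert r S).erase a)) := by
      intro a ha
      have hta : t ≠ a := fun h => htS (h ▸ ha)
      have hra : r ≠ a := fun h => hr (h ▸ ha)
      have n1 : r ∉ S.erase a := fun h => hr (Finset.mem_of_mem_erase h)
      have n2 : t ∉ S.erase a := fun h => htS (Finset.mem_of_mem_erase h)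
      have n3 : t ∉ insert r (S.erase a) := by simp [htr, htS]
      have n4 : r ∉ insert t (S.erase a) := by simp [htr.symm, hr]
      rw [Finset.erase_insert_of_ne hta, Finset.erase_insert_of_ne hta,
        Finset.erase_insert_of_ne hra, map_smul, map_smul, ← hbi t _ n3, ← hbi r _ n4,
        Finset.insert_comm r t, smul_smul, smul_smul, ← add_smul, FF_insert_left c w n3,
        FF_insert_left c w n1, FF_insert_left c w n2]
      congr 1
      simp only [FF_single]
      have d1 := hg t a
      have d2 := hg r a
      have d3 : w t - w a ≠ 0 := sub_ne_zero.mpr (fun h => hta (hw h))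
      have d4 : w r - w a ≠ 0 := sub_ne_zero.mpr (fun h => hra (hw h))
      have k1 : c / (w t - w a + c) * fC c (w t) (w a) = gC c (w t) (w a) := by
        unfold fC gC; field_simp
      have k2 : c / (w r - w a + c) * fC c (w r) (w a) = gC c (w r) (w a) := by
        unfold fC gC; field_simp
      have k3 := fg_three c (w r) (w t) (w a) (fun h => htr (hw h).symm)
        (fun h => hta (hw h).symm) (fun h => hra (hw h))
      linear_combination (lam a * FF c w (S.erase a) {a}) *
        (fC c (w r) (w a) * k1 - fC c (w r) (w t) * k1 - gC c (w t) (w r) * k2 - k3)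
    rw [Finset.sum_congr rfl hterm, Finset.sum_add_distrib, ← Finset.smul_sum, ← Finset.smul_sum,
      ← map_sum, ← map_sum]
    simp only [map_add, map_smul, FF_single, smul_add, smul_smul]
    have d1 := hg t r
    have d3 : w t - w r ≠ 0 := sub_ne_zero.mpr (fun h => htr (hw h))
    have k1 : c / (w t - w r + c) * fC c (w t) (w r) = gC c (w t) (w r) := by
      unfold fC gC; field_simp
    have q1 : lam r * (c / (w t - w r + c)) * (fC c (w t) (w r) * FF c w S {r})
        = gC c (w t) (w r) * (lam r * (c / (w r - w r + c)) * FF c w S {r}) := by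
      rw [← k1]; simp [hc]; ring
    rw [q1]
    module

end Action

section CAction

variable {V : Type*} [AddCommGroup V] [Module ℂ V]

/-- first order variation of the Bethe vector -/
def del (c : ℂ) (w : ι → ℂ) (b : Finset ι → V) (lam2 : ι → ℂ) (S : Finset ι) : V :=
  ∑ a ∈ S, (lam2 a * FF c w {a} (S.erase a)) • b (S.erase a)

lemma WG_neg (c : ℂ) (w : ι → ℂ) (hg : WG c w) : WG (-c) w := by
  intro i j h
  exact hg j i (by linear_combination -h)

lemma del_insert (c : ℂ) (hc : c ≠ 0) (w : ι → ℂ) (hw : Function.Injective w) (hg : WG c w)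
    (D B : ι → Module.End ℂ V) (b : Finset ι → V) (lam2 : ι → ℂ)
    (hDB : ∀ t a, t ≠ a → ∀ x, D t (B a x)
      = fC (-c) (w a) (w t) • B a (D t x) + gC (-c) (w t) (w a) • B t (D a x))
    (hD0 : ∀ t, D t (b ∅) = lam2 t • b ∅)
    (hbi : ∀ a S, a ∉ S → b (insert a S) = B a (b S)) (S : Finset ι) (r : ι) (hr : r ∉ S) :
    del c w b lam2 (insert r S) = B r (del c w b lam2 S) + D r (b S) := by
  rw [action (-c) (neg_ne_zero.mpr hc) w hw (WG_neg c w hg) D B b lam2 hDB hD0 hbi S r hr]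
  unfold del
  rw [Finset.sum_insert hr, Finset.sum_insert hr, Finset.erase_insert hr, map_sum]
  rw [add_left_comm, ← Finset.sum_add_distrib]
  congr 1
  · simp [hc, FF_neg]
  · apply Finset.sum_congr rfl
    intro a ha
    have hra : r ≠ a := fun h => hr (h ▸ ha)
    have n1 : r ∉ S.erase a := fun h => hr (Finset.mem_of_mem_erase h)
    rw [Finset.erase_insert_of_ne hra, map_smul, ← hbi _ _ n1, ← add_smul, FF_neg,
      FF_insert_right c w n1, FF_single]
    congr 1
    have d1 := WG_neg c w hg r a
    have d3 : w a - w r ≠ 0 := sub_ne_zero.mpr (fun h => hra (hw h).symm)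
    have k : -c / (w r - w a + -c) * fC c (w a) (w r) = fC c (w a) (w r) - 1 := by
      have d2 : w a - w r + c ≠ 0 := hg a r
      rw [show w r - w a + -c = -(w a - w r + c) by ring]
      unfold fC
      field_simp
      ring
    linear_combination (-lam2 a * FF c w {a} (S.erase a)) * k

lemma C_action (c : ℂ) (hc : c ≠ 0) (w : ι → ℂ) (hw : Function.Injective w) (hg : WG c w)
    (A B C D : ι → Module.End ℂ V) (b : Finset ι → V) (lam1 lam2 : ι → ℂ)
    (hAB : ∀ t a, t ≠ a → ∀ x, A t (B a x)
      = fC c (w a) (w t) • B a (A t x) + gC c (w t) (w a) • B t (A a x))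
    (hDB : ∀ t a, t ≠ a → ∀ x, D t (B a x)
      = fC (-c) (w a) (w t) • B a (D t x) + gC (-c) (w t) (w a) • B t (D a x))
    (hCB : ∀ t a, t ≠ a → ∀ x, C t (B a x) + A t (D a x)
      = fC c (w a) (w t) • (B a (C t x) + D a (A t x))
        + gC c (w t) (w a) • (B t (C a x) + D t (A a x)))
    (hA0 : ∀ t, A t (b ∅) = lam1 t • b ∅) (hD0 : ∀ t, D t (b ∅) = lam2 t • b ∅)
    (hC0 : ∀ t, C t (b ∅) = 0)
    (hbi : ∀ a S, a ∉ S → b (insert a S) = B a (b S)) (R : Finset ι) (t : ι) (ht : t ∈ R) :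
    C t (b (R.erase t)) = ∑ a ∈ R, ∑ e ∈ R.erase a,
      (lam2 a * lam1 e * fC c (w a) (w e) * FF c w {a} ((R.erase a).erase e)
        * FF c w ((R.erase a).erase e) {e} * (c / (w a - w t + c)) * (c / (w t - w e + c))) •
        b ((R.erase a).erase e) := by
  let A' : ι → Module.End ℂ (V × V) := fun t =>
    LinearMap.prod ((A t).comp (LinearMap.fst ℂ V V))
      ((A t).comp (LinearMap.snd ℂ V V) + (C t).comp (LinearMap.fst ℂ V V))
  let B' : ι → Module.End ℂ (V × V) := fun t =>
    LinearMap.prod ((B t).comp (LinearMap.fst ℂ V V))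
      ((B t).comp (LinearMap.snd ℂ V V) + (D t).comp (LinearMap.fst ℂ V V))
  let b' : Finset ι → V × V := fun S => (b S, del c w b lam2 S)
  have hA' : ∀ t x, A' t x = (A t x.1, A t x.2 + C t x.1) := fun t x => rfl
  have hB' : ∀ t x, B' t x = (B t x.1, B t x.2 + D t x.1) := fun t x => rfl
  have hact := action c hc w hw hg A' B' b' lam1 (by
      intro t a hta x
      simp only [hA', hB', Prod.smul_mk, Prod.mk_add_mk, map_add]
      rw [Prod.mk.injEq]
      refine ⟨hAB t a hta _, ?_⟩
      rw [hAB t a hta x.2]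
      have := hCB t a hta x.1
      linear_combination (norm := module) this)
    (by intro t; simp [hA', b', del, hA0, hC0])
    (by
      intro a S ha
      simp only [hB', b']
      rw [hbi a S ha, del_insert c hc w hw hg D B b lam2 hDB hD0 hbi S a ha])
    (R.erase t) t (by simp)
  rw [Finset.insert_erase ht] at hact
  have hact2 := congrArg Prod.snd hact
  simp only [hA', b', Prod.snd_sum, Prod.smul_snd] at hact2
  have hC : C t (b (R.erase t)) = (∑ e ∈ R, (lam1 e * (c / (w t - w e + c)) *
      FF c w (R.erase e) {e}) • del c w b lam2 (R.erase e)) - A t (del c w b lam2 (R.erase t)) := by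
    rw [← hact2]; abel
  have hAd : A t (del c w b lam2 (R.erase t)) = ∑ a ∈ R, (lam2 a *
      ((w a - w t) / (w a - w t + c)) * FF c w {a} (R.erase a)) • ∑ e ∈ R.erase a,
      (lam1 e * (c / (w t - w e + c)) * FF c w ((R.erase a).erase e) {e}) •
        b ((R.erase a).erase e) := by
    rw [← Finset.add_sum_erase R _ ht, sub_self, zero_div, mul_zero, zero_mul, zero_smul, zero_add]
    unfold del
    rw [map_sum]
    apply Finset.sum_congr rfl
    intro a ha
    obtain ⟨hat, haR⟩ := Finset.mem_erase.mp ha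
    have n1 : t ∉ (R.erase t).erase a := by simp
    rw [map_smul, action c hc w hw hg A B b lam1 hAB hA0 hbi _ t n1]
    have e1 : insert t ((R.erase t).erase a) = R.erase a := by
      rw [Finset.erase_right_comm, Finset.insert_erase (Finset.mem_erase.mpr ⟨hat.symm, ht⟩)]
    rw [e1]
    congr 1
    have e2 : FF c w {a} (R.erase a) = fC c (w a) (w t) * FF c w {a} ((R.erase t).erase a) := by
      rw [← e1, FF_insert_right c w n1, FF_single]
    rw [e2]
    have d1 := hg a t
    have d2 : w a - w t ≠ 0 := sub_ne_zero.mpr (fun h => hat (hw h))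
    have k : (w a - w t) / (w a - w t + c) * fC c (w a) (w t) = 1 := by
      unfold fC; field_simp
    linear_combination (-lam2 a * FF c w {a} ((R.erase t).erase a)) * k
  have hfirst : (∑ e ∈ R, (lam1 e * (c / (w t - w e + c)) *
      FF c w (R.erase e) {e}) • del c w b lam2 (R.erase e))
      = ∑ a ∈ R, ∑ e ∈ R.erase a, (lam1 e * (c / (w t - w e + c)) *
      FF c w (R.erase e) {e}) • ((lam2 a * FF c w {a} ((R.erase e).erase a)) •
        b ((R.erase e).erase a)) := by
    unfold del
    simp only [Finset.smul_sum]
    apply Finset.sum_comm'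
    intro x y
    simp only [Finset.mem_erase]
    constructor
    · rintro ⟨h1, h2, h3⟩; exact ⟨⟨h2.symm, h1⟩, h3⟩
    · rintro ⟨⟨h1, h2⟩, h3⟩; exact ⟨h2, h1.symm, h3⟩
  rw [hC, hfirst, hAd, ← Finset.sum_sub_distrib]
  apply Finset.sum_congr rfl
  intro a ha
  rw [Finset.smul_sum, ← Finset.sum_sub_distrib]
  apply Finset.sum_congr rfl
  intro e he
  obtain ⟨hea, heR⟩ := Finset.mem_erase.mp he
  rw [Finset.erase_right_comm (a := e) (b := a), smul_smul, smul_smul, ← sub_smul]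
  congr 1
  have e1 : FF c w {a} (R.erase a) = fC c (w a) (w e) * FF c w {a} ((R.erase a).erase e) := by
    conv_lhs => rw [← Finset.insert_erase he]
    rw [FF_insert_right c w (by simp), FF_single]
  have e2 : FF c w (R.erase e) {e} = fC c (w a) (w e) * FF c w ((R.erase a).erase e) {e} := by
    have hae : a ∈ R.erase e := Finset.mem_erase.mpr ⟨hea.symm, ha⟩
    conv_lhs => rw [← Finset.insert_erase hae]
    rw [FF_insert_left c w (by simp), FF_single, Finset.erase_right_comm]
  rw [e1, e2]
  have d1 := hg a t
  have k : (w a - w t) / (w a - w t + c) = 1 - c / (w a - w t + c) := by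
    field_simp; ring
  rw [k]
  ring

/-- coefficient of a partition -/
def Phi (c : ℂ) (w : ι → ℂ) (lam1 lam2 : ι → ℂ) (X I J : Finset ι) : ℂ :=
  (∏ i ∈ I, lam2 i) * (∏ j ∈ J, lam1 j) * FF c w I J * FF c w I ((X \ I) \ J)
    * FF c w ((X \ I) \ J) J

lemma Phi_step (c : ℂ) (w : ι → ℂ) (lam1 lam2 : ι → ℂ) (X I J : Finset ι) (hI : I ⊆ X)
    (hJ : J ⊆ X \ I) (a e : ι) (ha : a ∈ I) (he : e ∈ J) :
    Phi c w lam1 lam2 X (I.erase a) (J.erase e) * (lam2 a * lam1 e * fC c (w a) (w e)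
      * FF c w {a} ((X \ I) \ J) * FF c w ((X \ I) \ J) {e})
    = Phi c w lam1 lam2 X I J * FF c w (I.erase a) {a} * FF c w {e} (J.erase e) := by
  obtain ⟨heX, heI⟩ := Finset.mem_sdiff.mp (hJ he)
  have hae : a ≠ e := fun h => heI (h ▸ ha)
  have haJ : a ∉ J := fun h => (Finset.mem_sdiff.mp (hJ h)).2 ha
  have hZ : (X \ I.erase a) \ J.erase e = insert a (insert e ((X \ I) \ J)) := by
    ext x
    simp only [Finset.mem_sdiff, Finset.mem_erase, Finset.mem_insert]
    by_cases h1 : x = a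
    · subst h1; simp [hI ha, haJ]
    · by_cases h2 : x = e
      · subst h2; simp [heX, heI]
      · simp [h1, h2]
  have n1 : e ∉ (X \ I) \ J := by simp [he]
  have n2 : a ∉ insert e ((X \ I) \ J) := by simp [ha, hae]
  unfold Phi
  rw [hZ]
  generalize (X \ I) \ J = Z at *
  rw [FF_insert_left c w n2, FF_insert_left c w n1, FF_insert_right c w n2, FF_insert_right c w n1,
    ← Finset.mul_prod_erase I _ ha, ← Finset.mul_prod_erase J _ he]
  have m1 : a ∉ I.erase a := by simp
  have m2 : e ∉ J.erase e := by simp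
  have f1 : ∀ T, FF c w I T = FF c w {a} T * FF c w (I.erase a) T := by
    intro T
    conv_lhs => rw [← Finset.insert_erase ha]
    exact FF_insert_left c w m1
  have f2 : ∀ T, FF c w T J = FF c w T {e} * FF c w T (J.erase e) := by
    intro T
    conv_lhs => rw [← Finset.insert_erase he]
    exact FF_insert_right c w m2
  rw [f1 J, f1 Z, f2 {a}, f2 (I.erase a), f2 Z, FF_single]
  ring

end CAction

section Multi

variable {V : Type*} [AddCommGroup V] [Module ℂ V]

/-- the function `φ` entering the subset sum -/
def phiL (c : ℂ) (w : ι → ℂ) (l : List ι) (a : ι) : ℂ :=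
  ((l.map (fun i => w i - c)).map (fun τ => fC c τ (w a))).prod

/-- the right-hand side of the multiple action formula -/
def multiRHS (c : ℂ) (w : ι → ℂ) (b : Finset ι → V) (lam1 lam2 : ι → ℂ) (l : List ι)
    (X : Finset ι) : V :=
  ∑ I ∈ X.powersetCard l.length, ∑ J ∈ (X \ I).powersetCard l.length,
    (Phi c w lam1 lam2 X I J * KS c w (phiL c w l) I * KS (-c) w (phiL (-c) w l) J) •
      b ((X \ I) \ J)

lemma multi_step (c : ℂ) (hc : c ≠ 0) (w : ι → ℂ) (hw : Function.Injective w) (hg : WG c w)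
    (C : Module.End ℂ V) (b : Finset ι → V) (lam1 lam2 : ι → ℂ) (t : ι)
    (hC : ∀ R : Finset ι, t ∈ R → C (b (R.erase t)) = ∑ a ∈ R, ∑ e ∈ R.erase a,
      (lam2 a * lam1 e * fC c (w a) (w e) * FF c w {a} ((R.erase a).erase e)
        * FF c w ((R.erase a).erase e) {e} * (c / (w a - w t + c)) * (c / (w t - w e + c))) •
        b ((R.erase a).erase e))
    (l : List ι) (X : Finset ι) (ht : t ∉ X) :
    C (multiRHS c w b lam1 lam2 l X) = multiRHS c w b lam1 lam2 (t :: l) (insert t X) := by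
  have hg' := WG_neg c w hg
  have hc' := neg_ne_zero.mpr hc
  set k := l.length with hk
  let X' := insert t X
  let E : Finset ι → ℂ := fun I => ∏ i ∈ I, fC c (w t - c) (w i)
  let E' : Finset ι → ℂ := fun J => ∏ i ∈ J, fC (-c) (w t - -c) (w i)
  have hE0 : ∀ I, t ∈ I → E I = 0 := fun I h => Finset.prod_eq_zero h (by simp [fC])
  have hE0' : ∀ I, t ∈ I → E' I = 0 := fun I h => Finset.prod_eq_zero h (by simp [fC])
  have hinv : ∀ i, i ≠ t → fC c (w i) (w t) * fC c (w t - c) (w i) = 1 := by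
    intro i hi
    have d1 := hg i t
    have d2 : w i - w t ≠ 0 := sub_ne_zero.mpr (fun h => hi (hw h))
    have d3 : w t - c - w i ≠ 0 := fun h => d1 (by linear_combination -h)
    unfold fC; field_simp; ring
  have hinv' : ∀ i, i ≠ t → fC c (w t) (w i) * fC (-c) (w t - -c) (w i) = 1 := by
    intro i hi
    have d1 := hg t i
    have d2 : w t - w i ≠ 0 := sub_ne_zero.mpr (fun h => hi (hw h).symm)
    have d3 : w t - -c - w i ≠ 0 := fun h => d1 (by linear_combination h)
    unfold fC; field_simp; ring
  have hEI : ∀ I, t ∉ I → FF c w I {t} * E I = 1 := by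
    intro I hI
    rw [FF_single_right, ← Finset.prod_mul_distrib]
    exact Finset.prod_eq_one fun i hi => hinv i (fun h => hI (h ▸ hi))
  have hEI' : ∀ I, t ∉ I → FF c w {t} I * E' I = 1 := by
    intro I hI
    rw [FF_single_left, ← Finset.prod_mul_distrib]
    exact Finset.prod_eq_one fun i hi => hinv' i (fun h => hI (h ▸ hi))
  let K := KS c w (phiL c w l)
  let K' := KS (-c) w (phiL (-c) w l)
  let G : Finset ι → Finset ι → V := fun I J =>
    (Phi c w lam1 lam2 X' I J * E I * E' J * K I * K' J) • C (b (((X' \ I) \ J).erase t))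
  have h1 : C (multiRHS c w b lam1 lam2 l X)
      = ∑ I ∈ X'.powersetCard k, ∑ J ∈ (X' \ I).powersetCard k, G I J := by
    unfold multiRHS
    rw [map_sum]
    have hsub : X.powersetCard k ⊆ X'.powersetCard k :=
      Finset.powersetCard_mono (Finset.subset_insert _ _)
    rw [← Finset.sum_subset hsub]
    · apply Finset.sum_congr rfl
      intro I hI
      have hIX := (Finset.mem_powersetCard.mp hI).1
      have htI : t ∉ I := fun h => ht (hIX h)
      have hsub2 : (X \ I).powersetCard k ⊆ (X' \ I).powersetCard k :=
        Finset.powersetCard_mono (Finset.sdiff_subset_sdiff (Finset.subset_insert _ _) le_rfl)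
      rw [map_sum, ← Finset.sum_subset hsub2]
      · apply Finset.sum_congr rfl
        intro J hJ
        have hJX := (Finset.mem_powersetCard.mp hJ).1
        have htJ : t ∉ J := fun h => ht (Finset.mem_sdiff.mp (hJX h)).1
        have hZ : (X' \ I) \ J = insert t ((X \ I) \ J) := by
          simp only [X']
          rw [Finset.insert_sdiff_of_notMem _ htI, Finset.insert_sdiff_of_notMem _ htJ]
        have htZ : t ∉ (X \ I) \ J := by simp [ht]
        simp only [G]
        rw [map_smul, hZ, Finset.erase_insert htZ]
        congr 1
        unfold Phi
        rw [hZ, FF_insert_left c w htZ, FF_insert_right c w htZ]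
        have q1 := hEI I htI
        have q2 := hEI' J htJ
        simp only [K, K']
        linear_combination (-(∏ i ∈ I, lam2 i) * (∏ j ∈ J, lam1 j) * FF c w I J
          * FF c w I ((X \ I) \ J) * FF c w ((X \ I) \ J) J * KS c w (phiL c w l) I *
          KS (-c) w (phiL (-c) w l) J) * (q1 * (FF c w {t} J * E' J) + q2)
      · intro J hJ hJ'
        have htJ : t ∈ J := by
          by_contra htJ
          apply hJ'
          rw [Finset.mem_powersetCard] at hJ ⊢
          refine ⟨fun x hx => ?_, hJ.2⟩
          have := hJ.1 hx
          simp only [X', Finset.mem_sdiff, Finset.mem_insert] at this ⊢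
          exact ⟨this.1.resolve_left (fun h => htJ (h ▸ hx)), this.2⟩
        simp [G, hE0' J htJ]
    · intro I hI hI'
      have htI : t ∈ I := by
        by_contra htI
        apply hI'
        rw [Finset.mem_powersetCard] at hI ⊢
        refine ⟨fun x hx => ?_, hI.2⟩
        have := hI.1 hx
        simp only [X', Finset.mem_insert] at this
        exact this.resolve_left (fun h => htI (h ▸ hx))
      apply Finset.sum_eq_zero
      intro J _
      simp [G, hE0 I htI]
  let F : Finset ι → Finset ι → ι → ι → V := fun I J a e =>
    (Phi c w lam1 lam2 X' I J * E I * E' J * K I * K' J *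
      (lam2 a * lam1 e * fC c (w a) (w e) * FF c w {a} ((((X' \ I) \ J).erase a).erase e)
        * FF c w ((((X' \ I) \ J).erase a).erase e) {e} * (c / (w a - w t + c))
        * (c / (w t - w e + c)))) • b ((((X' \ I) \ J).erase a).erase e)
  have h2 : ∀ I J, G I J = ∑ a ∈ (X' \ I) \ J, ∑ e ∈ ((X' \ I) \ J).erase a, F I J a e := by
    intro I J
    by_cases h : t ∈ (X' \ I) \ J
    · simp only [G, F]
      rw [hC _ h, Finset.smul_sum]
      simp only [Finset.smul_sum, smul_smul]
    · have h0 : E I * E' J = 0 := by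
        simp only [X', Finset.mem_sdiff, Finset.mem_insert, true_or, true_and, not_and, not_not] at h
        by_cases h' : t ∈ I
        · rw [hE0 I h', zero_mul]
        · rw [hE0' J (h h'), mul_zero]
      have h0' : Phi c w lam1 lam2 X' I J * E I * E' J = 0 := by rw [mul_assoc, h0, mul_zero]
      simp [G, F, h0']
  rw [h1]
  simp only [h2]
  rw [reindex_two X' k F]
  unfold multiRHS
  rw [List.length_cons]
  apply Finset.sum_congr rfl
  intro I hI
  apply Finset.sum_congr rfl
  intro J hJ
  obtain ⟨hIX, hIc⟩ := Finset.mem_powersetCard.mp hI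
  obtain ⟨hJX, hJc⟩ := Finset.mem_powersetCard.mp hJ
  have hr := KS_rec' c hc w hw hg (w t - c) (l.map (fun i => w i - c)) I
    (by
      intro σ hσ a _ h
      rw [← List.map_cons (f := fun i => w i - c)] at hσ
      obtain ⟨i, _, rfl⟩ := List.mem_map.mp hσ
      exact hg a i (by rw [h]; ring)) (by simpa using hIc)
  have hr' := KS_rec' (-c) hc' w hw hg' (w t - -c) (l.map (fun i => w i - -c)) J
    (by
      intro σ hσ a _ h
      rw [← List.map_cons (f := fun i => w i - -c)] at hσ
      obtain ⟨i, _, rfl⟩ := List.mem_map.mp hσ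
      exact hg' a i (by rw [h]; ring)) (by simpa using hJc)
  have hr2 : KS c w (phiL c w (t :: l)) I = ∑ a ∈ I, gC c (w t - c) (w a) * E (I.erase a)
      * FF c w (I.erase a) {a} * K (I.erase a) := hr
  have hr2' : KS (-c) w (phiL (-c) w (t :: l)) J = ∑ a ∈ J, gC (-c) (w t - -c) (w a) *
      E' (J.erase a) * FF (-c) w (J.erase a) {a} * K' (J.erase a) := hr'
  rw [hr2, hr2', mul_assoc, Finset.sum_mul_sum, Finset.mul_sum, Finset.sum_smul]
  apply Finset.sum_congr rfl
  intro a ha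
  rw [Finset.mul_sum, Finset.sum_smul]
  apply Finset.sum_congr rfl
  intro e he
  obtain ⟨heX, heI⟩ := Finset.mem_sdiff.mp (hJX he)
  have haJ : a ∉ J := fun h => (Finset.mem_sdiff.mp (hJX h)).2 ha
  have hZ : (((X' \ I.erase a) \ J.erase e).erase a).erase e = (X' \ I) \ J := by
    ext x
    simp only [Finset.mem_sdiff, Finset.mem_erase]
    by_cases h1 : x = a
    · subst h1; simp [ha]
    · by_cases h2 : x = e
      · subst h2; simp [he]
      · simp [h1, h2]
  simp only [F, hZ]
  change _ = _ • b ((X' \ I) \ J)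
  congr 1
  have hP := Phi_step c w lam1 lam2 X' I J hIX hJX a e ha he
  have g1 : gC c (w t - c) (w a) = -(c / (w a - w t + c)) := by
    unfold gC
    rw [← div_neg]; congr 1; ring
  have g2 : gC (-c) (w t - -c) (w e) = -(c / (w t - w e + c)) := by
    unfold gC
    rw [neg_div]; congr 2; ring
  rw [g1, g2, FF_neg]
  linear_combination (E (I.erase a) * E' (J.erase e) * K (I.erase a) * K' (J.erase e) *
    (c / (w a - w t + c)) * (c / (w t - w e + c))) * hP

end Multi


section Filtration

variable {V : Type*} [AddCommGroup V] [Module ℂ V]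

/-- span of the Bethe vectors with parameters in `X` that have more than `k - m` of them -/
def GG (b : Finset ι → V) (k m : ℕ) (X : Finset ι) : Submodule ℂ V :=
  Submodule.span ℂ (b '' {S | S ⊆ X ∧ k < S.card + m})

lemma b_mem_GG (b : Finset ι → V) (k m : ℕ) (X S : Finset ι) (h1 : S ⊆ X) (h2 : k < S.card + m) :
    b S ∈ GG b k m X := Submodule.subset_span ⟨S, ⟨h1, h2⟩, rfl⟩

lemma multiRHS_nil (c : ℂ) (w : ι → ℂ) (b : Finset ι → V) (lam1 lam2 : ι → ℂ) (X : Finset ι) :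
    multiRHS c w b lam1 lam2 [] X = b X := by
  simp [multiRHS, Phi, KS, FF]

lemma multiRHS_mem (c : ℂ) (w : ι → ℂ) (b : Finset ι → V) (lam1 lam2 : ι → ℂ) (l : List ι)
    (X : Finset ι) (k : ℕ) (hX : X.card = k + l.length) :
    multiRHS c w b lam1 lam2 l X ∈ GG b k (l.length + 1) X := by
  unfold multiRHS
  refine Submodule.sum_mem _ fun I hI => Submodule.sum_mem _ fun J hJ => Submodule.smul_mem _ _ ?_
  obtain ⟨hIX, hIc⟩ := Finset.mem_powersetCard.mp hI
  obtain ⟨hJX, hJc⟩ := Finset.mem_powersetCard.mp hJ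
  apply b_mem_GG
  · exact Finset.sdiff_subset.trans Finset.sdiff_subset
  · have h1 := Finset.card_sdiff_add_card_eq_card hIX
    have h2 := Finset.card_sdiff_add_card_eq_card hJX
    omega

lemma GG_map (b : Finset ι → V) (k m m' : ℕ) (X X' : Finset ι) (F : Module.End ℂ V)
    (h : ∀ S, S ⊆ X → k < S.card + m → F (b S) ∈ GG b k m' X') (x : V) (hx : x ∈ GG b k m X) :
    F x ∈ GG b k m' X' := by
  have : GG b k m X ≤ (GG b k m' X').comap F := by
    unfold GG
    rw [Submodule.span_le]
    rintro _ ⟨S, ⟨h1, h2⟩, rfl⟩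
    exact h S h1 h2
  exact this hx

lemma GG_mono (b : Finset ι → V) (k m m' : ℕ) (h : m ≤ m') (X : Finset ι) :
    GG b k m X ≤ GG b k m' X := by
  apply Submodule.span_mono
  apply Set.image_mono
  rintro S ⟨h1, h2⟩
  exact ⟨h1, by omega⟩

lemma filtration (c : ℂ) (hc : c ≠ 0) (w : ι → ℂ) (hw : Function.Injective w) (hg : WG c w)
    (A B C D N : ι → Module.End ℂ V) (b : Finset ι → V) (lam1 lam2 : ι → ℂ) (β1 β2 : ℂ)
    (hN : ∀ t x, N t x = C t x + β1 • A t x + β2 • D t x + (β1 * β2) • B t x)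
    (hAB : ∀ t a, t ≠ a → ∀ x, A t (B a x)
      = fC c (w a) (w t) • B a (A t x) + gC c (w t) (w a) • B t (A a x))
    (hDB : ∀ t a, t ≠ a → ∀ x, D t (B a x)
      = fC (-c) (w a) (w t) • B a (D t x) + gC (-c) (w t) (w a) • B t (D a x))
    (hCB : ∀ t a, t ≠ a → ∀ x, C t (B a x) + A t (D a x)
      = fC c (w a) (w t) • (B a (C t x) + D a (A t x))
        + gC c (w t) (w a) • (B t (C a x) + D t (A a x)))
    (hA0 : ∀ t, A t (b ∅) = lam1 t • b ∅) (hD0 : ∀ t, D t (b ∅) = lam2 t • b ∅)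
    (hC0 : ∀ t, C t (b ∅) = 0)
    (hbi : ∀ a S, a ∉ S → b (insert a S) = B a (b S)) (S0 : Finset ι) (l : List ι) :
    l.Nodup → (∀ t ∈ l, t ∉ S0) →
    (l.map N).prod (b S0) - multiRHS c w b lam1 lam2 l (l.toFinset ∪ S0)
      ∈ GG b S0.card l.length (l.toFinset ∪ S0) := by
  induction l with
  | nil => intro _ _; simp [multiRHS_nil]
  | cons t l ih =>
    intro hnd hdis
    obtain ⟨htl, hnd'⟩ := List.nodup_cons.mp hnd
    have hdis' : ∀ t ∈ l, t ∉ S0 := fun r hr => hdis r (List.mem_cons_of_mem _ hr)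
    have ih := ih hnd' hdis'
    have htS := hdis t List.mem_cons_self
    set X := l.toFinset ∪ S0 with hX
    have htX : t ∉ X := by
      rw [hX, Finset.mem_union, List.mem_toFinset]; tauto
    have hXc : X.card = S0.card + l.length := by
      rw [hX, Finset.card_union_of_disjoint, List.toFinset_card_of_nodup hnd', add_comm]
      rw [Finset.disjoint_left]
      intro a ha
      exact hdis' a (List.mem_toFinset.mp ha)
    have hX' : (t :: l).toFinset ∪ S0 = insert t X := by
      rw [List.toFinset_cons, Finset.insert_union]
    rw [hX']
    have hCa := C_action c hc w hw hg A B C D b lam1 lam2 hAB hDB hCB hA0 hD0 hC0 hbi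
    have hms := multi_step c hc w hw hg (C t) b lam1 lam2 t (fun R hR => hCa R t hR) l X htX
    set k := S0.card
    have hAmem : ∀ S, S ⊆ X → k < S.card + (l.length + 1) →
        A t (b S) ∈ GG b k (l.length + 1) (insert t X) := by
      intro S hS hk
      have htS' : t ∉ S := fun h => htX (hS h)
      rw [action c hc w hw hg A B b lam1 hAB hA0 hbi S t htS']
      refine Submodule.sum_mem _ fun a ha => Submodule.smul_mem _ _ ?_
      apply b_mem_GG
      · exact (Finset.erase_subset _ _).trans (Finset.insert_subset_insert _ hS)
      · rw [Finset.card_erase_of_mem ha, Finset.card_insert_of_notMem htS']; omega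
    have hDmem : ∀ S, S ⊆ X → k < S.card + (l.length + 1) →
        D t (b S) ∈ GG b k (l.length + 1) (insert t X) := by
      intro S hS hk
      have htS' : t ∉ S := fun h => htX (hS h)
      rw [action (-c) (neg_ne_zero.mpr hc) w hw (WG_neg c w hg) D B b lam2 hDB hD0 hbi S t htS']
      refine Submodule.sum_mem _ fun a ha => Submodule.smul_mem _ _ ?_
      apply b_mem_GG
      · exact (Finset.erase_subset _ _).trans (Finset.insert_subset_insert _ hS)
      · rw [Finset.card_erase_of_mem ha, Finset.card_insert_of_notMem htS']; omega
    have hBmem : ∀ S, S ⊆ X → k < S.card + (l.length + 1) →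
        B t (b S) ∈ GG b k (l.length + 1) (insert t X) := by
      intro S hS hk
      have htS' : t ∉ S := fun h => htX (hS h)
      rw [← hbi t S htS']
      apply b_mem_GG
      · exact Finset.insert_subset_insert _ hS
      · rw [Finset.card_insert_of_notMem htS']; omega
    have hCmem : ∀ S, S ⊆ X → k < S.card + l.length →
        C t (b S) ∈ GG b k (l.length + 1) (insert t X) := by
      intro S hS hk
      have htS' : t ∉ S := fun h => htX (hS h)
      have := hCa (insert t S) t (Finset.mem_insert_self _ _)
      rw [Finset.erase_insert htS'] at this
      rw [this]
      refine Submodule.sum_mem _ fun a ha => Submodule.sum_mem _ fun e he =>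
        Submodule.smul_mem _ _ ?_
      apply b_mem_GG
      · exact ((Finset.erase_subset _ _).trans (Finset.erase_subset _ _)).trans
          (Finset.insert_subset_insert _ hS)
      · have h1 := Finset.card_erase_add_one ha
        have h2 := Finset.card_erase_add_one he
        rw [Finset.card_insert_of_notMem htS'] at h1
        omega
    have hx0 : (l.map N).prod (b S0) ∈ GG b k (l.length + 1) X := by
      have h1 := GG_mono b k l.length (l.length + 1) (by omega) X ih
      have h2 := multiRHS_mem c w b lam1 lam2 l X k hXc
      simpa using Submodule.add_mem _ h1 h2
    rw [List.map_cons, List.prod_cons, Module.End.mul_apply, hN, ← hms]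
    set x := (l.map N).prod (b S0)
    have e1 := GG_map b k _ (l.length + 1) X (insert t X) (C t) hCmem _ ih
    have e2 := GG_map b k _ (l.length + 1) X (insert t X) (A t) hAmem _ hx0
    have e3 := GG_map b k _ (l.length + 1) X (insert t X) (D t) hDmem _ hx0
    have e4 := GG_map b k _ (l.length + 1) X (insert t X) (B t) hBmem _ hx0
    rw [List.length_cons]
    rw [map_sub] at e1
    have := Submodule.add_mem _ (Submodule.add_mem _ (Submodule.add_mem _ e1
      (Submodule.smul_mem _ β1 e2)) (Submodule.smul_mem _ β2 e3))
      (Submodule.smul_mem _ (β1 * β2) e4)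
    convert this using 1
    abel

end Filtration

end Helpers

/-- the commutation relations of the Yangian -/
def YRel {V : Type*} [AddCommGroup V] [Module ℂ V] (c : ℂ)
    (N : Fin 2 → Fin 2 → ℂ → Module.End ℂ V) : Prop :=
  ∀ (i j k l : Fin 2) (x y : ℂ), x ≠ y →
      N i j x * N k l y - N k l y * N i j x
        = gC c x y • (N k j y * N i l x - N k j x * N i l y)

lemma YRel_col {V : Type*} [AddCommGroup V] [Module ℂ V] (c : ℂ)
    (N : Fin 2 → Fin 2 → ℂ → Module.End ℂ V) (h : YRel c N) (q : Fin 2 → ℂ) :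
    YRel c (fun i j x => N i j x + q j • N i 1 x) := by
  intro i j k l x y hxy
  have h1 := h i j k l x y hxy
  have h2 := h i 1 k l x y hxy
  have h3 := h i j k 1 x y hxy
  have h4 := h i 1 k 1 x y hxy
  simp only [add_mul, mul_add, smul_mul_assoc, mul_smul_comm]
  linear_combination (norm := module) h1 + q j • h2 + q l • h3 + (q j * q l) • h4

lemma YRel_row {V : Type*} [AddCommGroup V] [Module ℂ V] (c : ℂ)
    (N : Fin 2 → Fin 2 → ℂ → Module.End ℂ V) (h : YRel c N) (q : Fin 2 → ℂ) :
    YRel c (fun i j x => N i j x + q i • N 0 j x) := by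
  intro i j k l x y hxy
  have h1 := h i j k l x y hxy
  have h2 := h 0 j k l x y hxy
  have h3 := h i j 0 l x y hxy
  have h4 := h 0 j 0 l x y hxy
  simp only [add_mul, mul_add, smul_mul_assoc, mul_smul_comm]
  linear_combination (norm := module) h1 + q i • h2 + q k • h3 + (q i * q k) • h4

lemma YRel_AB {V : Type*} [AddCommGroup V] [Module ℂ V] (c : ℂ)
    (T : Fin 2 → Fin 2 → ℂ → Module.End ℂ V) (h : YRel c T) (t a : ℂ) (hta : t ≠ a) (x : V) :
    T 0 0 t (T 0 1 a x) = fC c a t • T 0 1 a (T 0 0 t x) + gC c t a • T 0 1 t (T 0 0 a x) := by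
  have h1 := congrArg (fun F : Module.End ℂ V => F x) (h 0 1 0 0 a t hta.symm)
  simp only [LinearMap.sub_apply, LinearMap.smul_apply, Module.End.mul_apply] at h1
  have hg : gC c t a = - gC c a t := by
    unfold gC; rw [← div_neg, neg_sub]
  rw [fC_eq_one_add _ _ _ hta.symm, hg]
  linear_combination (norm := module) -h1

lemma YRel_DB {V : Type*} [AddCommGroup V] [Module ℂ V] (c : ℂ)
    (T : Fin 2 → Fin 2 → ℂ → Module.End ℂ V) (h : YRel c T) (t a : ℂ) (hta : t ≠ a) (x : V) :
    T 1 1 t (T 0 1 a x)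
      = fC (-c) a t • T 0 1 a (T 1 1 t x) + gC (-c) t a • T 0 1 t (T 1 1 a x) := by
  have h1 := congrArg (fun F : Module.End ℂ V => F x) (h 1 1 0 1 t a hta)
  simp only [LinearMap.sub_apply, LinearMap.smul_apply, Module.End.mul_apply] at h1
  have hg : gC c t a = - gC c a t := by
    unfold gC; rw [← div_neg, neg_sub]
  rw [fC_neg, gC_neg, fC_eq_one_add _ _ _ hta]
  rw [hg] at h1 ⊢
  linear_combination (norm := module) h1

lemma YRel_CB {V : Type*} [AddCommGroup V] [Module ℂ V] (c : ℂ)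
    (T : Fin 2 → Fin 2 → ℂ → Module.End ℂ V) (h : YRel c T) (t a : ℂ) (hta : t ≠ a) (x : V) :
    T 1 0 t (T 0 1 a x) + T 0 0 t (T 1 1 a x)
      = fC c a t • (T 0 1 a (T 1 0 t x) + T 1 1 a (T 0 0 t x))
        + gC c t a • (T 0 1 t (T 1 0 a x) + T 1 1 t (T 0 0 a x)) := by
  have h1 := congrArg (fun F : Module.End ℂ V => F x) (h 0 1 1 0 a t hta.symm)
  have h2 := congrArg (fun F : Module.End ℂ V => F x) (h 1 1 0 0 a t hta.symm)
  simp only [LinearMap.sub_apply, LinearMap.smul_apply, Module.End.mul_apply] at h1 h2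
  have hg : gC c t a = - gC c a t := by
    unfold gC; rw [← div_neg, neg_sub]
  rw [fC_eq_one_add _ _ _ hta.symm, hg]
  linear_combination (norm := module) -h1 - h2

/-- For `μ = 1` and `m = n` the modified scalar product reduces to the ordinary
Izergin--Korepin scalar product. -/
theorem stmt8
    (c : ℂ) (hc : c ≠ 0) (β1 β2 μ : ℂ) (hβ1 : β1 ≠ 0) (hβ2 : β2 ≠ 0)
    (hμ : μ = 1)
    (V : Type*) [AddCommGroup V] [Module ℂ V]
    (N : Fin 2 → Fin 2 → ℂ → Module.End ℂ V)
    (vac : V) (lam1 lam2 : ℂ → ℂ) (vacDual : V →ₗ[ℂ] ℂ)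
    (hYang : ∀ (i j k l : Fin 2) (x y : ℂ), x ≠ y →
      N i j x * N k l y - N k l y * N i j x
        = gC c x y • (N k j y * N i l x - N k j x * N i l y))
    (hCommSame : ∀ (i j : Fin 2) (x y : ℂ), N i j x * N i j y = N i j y * N i j x)
    (hvac11 : ∀ x : ℂ, N 0 0 x vac = lam1 x • vac + β2 • (N 0 1 x vac))
    (hvac22 : ∀ x : ℂ, N 1 1 x vac = lam2 x • vac + β1 • (N 0 1 x vac))
    (hvac21 : ∀ x : ℂ, N 1 0 x vac
      = (β1 * lam1 x + β2 * lam2 x) • vac + (β1 * β2) • (N 0 1 x vac))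
    (hnorm : vacDual vac = 1)
    (hAvg : ∀ (p : ℕ) (w : Fin p → ℂ), Generic c w →
      vacDual (opProd (N 0 1) w Finset.univ vac)
        = (1 - μ) ^ p * ∑ s : Finset (Fin p),
            (-β1) ^ (-(s.card : ℤ)) * (-β2) ^ (-(sᶜ.card : ℤ)) *
              (∏ i ∈ s, lam2 (w i)) * (∏ i ∈ sᶜ, lam1 (w i)) * fSS c w s sᶜ)
    (n : ℕ) (u v : Fin n → ℂ)
    (hgen : Generic c (Fin.append u v)) :
    vacDual ((opProd (N 1 0) u Finset.univ * opProd (N 0 1) v Finset.univ) vac)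
      = ∑ s ∈ Finset.powersetCard n (Finset.univ : Finset (Fin (n + n))),
          (∏ i ∈ s, lam2 (Fin.append u v i)) *
            (∏ i ∈ sᶜ, lam1 (Fin.append u v i)) *
            fSS c (Fin.append u v) s sᶜ *
            KIz c 1 u (fun i => restr (Fin.append u v) s i + c) *
            KIzBar c 1 u (fun i => restr (Fin.append u v) sᶜ i - c) := by
  subst hμ
  set w := Fin.append u v with hwdef
  have hw : Function.Injective w := by
    intro i j hij
    by_contra h
    exact (hgen i j h).1 (sub_eq_zero.mpr hij)
  have hg : WG c w := by
    intro i j h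
    by_cases hij : i = j
    · subst hij; apply hc; simpa using h
    · exact (hgen i j hij).2.2.1 (eq_neg_of_add_eq_zero_left h)
  let q1 : Fin 2 → ℂ := fun i => if i = 0 then 0 else -β1
  let q2 : Fin 2 → ℂ := fun i => if i = 0 then -β2 else 0
  let M : Fin 2 → Fin 2 → ℂ → Module.End ℂ V := fun i j x => N i j x + q1 i • N 0 j x
  let T : Fin 2 → Fin 2 → ℂ → Module.End ℂ V := fun i j x => M i j x + q2 j • M i 1 x
  have hT : YRel c T := YRel_col c M (YRel_row c N hYang q1) q2
  have hT01 : ∀ x, T 0 1 x = N 0 1 x := by intro x; simp [T, M, q1, q2]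
  have hT00 : ∀ x y, T 0 0 x y = N 0 0 x y - β2 • N 0 1 x y := by
    intro x y; simp [T, M, q1, q2, sub_eq_add_neg]
  have hT11 : ∀ x y, T 1 1 x y = N 1 1 x y - β1 • N 0 1 x y := by
    intro x y; simp [T, M, q1, q2, sub_eq_add_neg]
  have hT10 : ∀ x y, T 1 0 x y
      = N 1 0 x y - β1 • N 0 0 x y - β2 • N 1 1 x y + (β1 * β2) • N 0 1 x y := by
    intro x y; simp [T, M, q1, q2]; module
  have hcomm : ∀ S : Finset (Fin (n + n)),
      (S : Set (Fin (n + n))).Pairwise (Function.onFun Commute (fun i => N 0 1 (w i))) :=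
    fun S i _ j _ _ => hCommSame 0 1 (w i) (w j)
  let b : Finset (Fin (n + n)) → V := fun S =>
    (S.noncommProd (fun i => N 0 1 (w i)) (hcomm S)) vac
  have hb0 : b ∅ = vac := by simp [b]
  have hbi : ∀ a S, a ∉ S → b (insert a S) = T 0 1 (w a) (b S) := by
    intro a S ha
    rw [hT01]
    simp only [b]
    rw [Finset.noncommProd_insert_of_notMem _ _ _ _ ha]
    rfl
  have hblist : ∀ l : List (Fin (n + n)), l.Nodup →
      (l.map (fun i => N 0 1 (w i))).prod vac = b l.toFinset := by
    intro l
    induction l with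
    | nil => intro _; simp [hb0]
    | cons t l ih =>
      intro h
      obtain ⟨h1, h2⟩ := List.nodup_cons.mp h
      rw [List.map_cons, List.prod_cons, Module.End.mul_apply, ih h2, List.toFinset_cons,
        hbi t _ (by simpa using h1), hT01]
  have hbS : ∀ S : Finset (Fin (n + n)), S.Nonempty → vacDual (b S) = 0 := by
    intro S hS
    have hge : Generic c (fun i => w (S.orderEmbOfFin rfl i)) := by
      intro i j hij
      exact hgen _ _ (fun h => hij ((S.orderEmbOfFin rfl).injective h))
    have h1 := hAvg S.card (fun i => w (S.orderEmbOfFin rfl i)) hge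
    rw [sub_self, zero_pow (Finset.card_ne_zero.mpr hS), zero_mul] at h1
    rw [← h1]
    congr 1
    unfold opProd
    have h2 := hblist ((Finset.univ.sort (· ≤ ·)).map (S.orderEmbOfFin rfl))
      ((Finset.sort_nodup _ _).map (S.orderEmbOfFin rfl).injective)
    rw [List.map_map] at h2
    have h3 : ((Finset.univ.sort (· ≤ ·)).map (S.orderEmbOfFin rfl)).toFinset = S := by
      ext a
      have := Finset.range_orderEmbOfFin S rfl
      have h4 : a ∈ Set.range (S.orderEmbOfFin rfl) ↔ a ∈ S := by rw [this]; simp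
      simp only [List.mem_toFinset, List.mem_map, Finset.mem_sort, Finset.mem_univ, true_and]
      exact h4
    rw [h3] at h2
    rw [← h2]
    rfl
  let S0 : Finset (Fin (n + n)) := (Finset.univ : Finset (Fin n)).image (Fin.natAdd n)
  have hS0c : S0.card = n := by
    rw [Finset.card_image_of_injective _ (Fin.natAdd_injective n n)]; simp
  have hv : opProd (N 0 1) v Finset.univ vac = b S0 := by
    have h2 := hblist ((Finset.univ.sort (· ≤ ·)).map (Fin.natAdd n))
      ((Finset.sort_nodup _ _).map (Fin.natAdd_injective n n))
    have h3 : ((Finset.univ.sort (· ≤ ·)).map (Fin.natAdd n : Fin n → Fin (n + n))).toFinset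
        = S0 := by
      ext a; simp [S0]
    rw [h3, List.map_map] at h2
    rw [← h2]
    unfold opProd
    congr 3
    funext i
    exact congrArg (N 0 1) (Fin.append_right u v i).symm
  let l : List (Fin (n + n)) := ((Finset.univ : Finset (Fin n)).sort (· ≤ ·)).map (Fin.castAdd n)
  have hl : l.Nodup := (Finset.sort_nodup _ _).map (Fin.castAdd_injective n n)
  have hlen : l.length = n := by simp [l]
  have hu : opProd (N 1 0) u Finset.univ = (l.map (fun i => N 1 0 (w i))).prod := by
    unfold opProd
    simp only [l, List.map_map]
    congr 2
    funext i
    simp [w]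
  have hlX : l.toFinset ∪ S0 = Finset.univ := by
    ext a
    refine Fin.addCases (fun i => ?_) (fun i => ?_) a <;> simp [l, S0]
  have hdis : ∀ t ∈ l, t ∉ S0 := by
    intro t ht ht'
    simp only [l, S0, List.mem_map, Finset.mem_image] at ht ht'
    obtain ⟨i, _, rfl⟩ := ht
    obtain ⟨j, _, hj⟩ := ht'
    have := congrArg Fin.val hj
    simp at this
    omega
  have key := filtration c hc w hw hg (fun i => T 0 0 (w i)) (fun i => T 0 1 (w i))
    (fun i => T 1 0 (w i)) (fun i => T 1 1 (w i)) (fun i => N 1 0 (w i)) b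
    (fun i => lam1 (w i)) (fun i => lam2 (w i)) β1 β2
    (by intro t x; simp only [hT00, hT11, hT10, hT01]; module)
    (fun t a h x => YRel_AB c T hT _ _ (fun h' => h (hw h')) x)
    (fun t a h x => YRel_DB c T hT _ _ (fun h' => h (hw h')) x)
    (fun t a h x => YRel_CB c T hT _ _ (fun h' => h (hw h')) x)
    (by intro t; simp only [hb0, hT00, hvac11]; module)
    (by intro t; simp only [hb0, hT11, hvac22]; module)
    (by intro t; simp only [hb0, hT10, hvac11, hvac22, hvac21]; module)
    hbi S0 l hl hdis
  rw [hlX, hlen, hS0c] at key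
  have hker : GG b n n Finset.univ ≤ LinearMap.ker vacDual := by
    unfold GG
    rw [Submodule.span_le]
    rintro _ ⟨S, ⟨_, h2⟩, rfl⟩
    exact hbS S (Finset.card_pos.mp (by omega))
  have hk := hker key
  rw [LinearMap.mem_ker, map_sub, sub_eq_zero] at hk
  rw [Module.End.mul_apply, hv, hu, hk]
  unfold multiRHS
  rw [map_sum, hlen]
  apply Finset.sum_congr rfl
  intro s hs
  have hsc : s.card = n := (Finset.mem_powersetCard.mp hs).2
  have hcc : sᶜ.card = n := by
    rw [Finset.card_compl, hsc]; simp
  have hps : (Finset.univ \ s).powersetCard n = {sᶜ} := by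
    rw [← Finset.compl_eq_univ_sdiff]
    have := Finset.powersetCard_self sᶜ
    rwa [hcc] at this
  rw [hps, Finset.sum_singleton, map_smul]
  have he : (Finset.univ \ s) \ sᶜ = ∅ := by
    rw [← Finset.compl_eq_univ_sdiff, Finset.sdiff_self]
  have hphi : ∀ d : ℂ, phiL d w l = fun a => ∏ i, fC d (u i - d) (w a) := by
    intro d
    funext a
    unfold phiL
    simp only [l, List.map_map]
    rw [← List.prod_toFinset _ (Finset.sort_nodup _ _), Finset.sort_toFinset]
    apply Finset.prod_congr rfl
    intro i _
    simp [w]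
  rw [he, hb0, hnorm, KIz_restr c hc u w hw hg s]
  unfold KIzBar
  have hbar := KIz_restr (-c) (neg_ne_zero.mpr hc) u w hw (WG_neg c w hg) sᶜ
  simp only [← sub_eq_add_neg] at hbar
  rw [hbar, hphi, hphi]
  simp only [Phi, he, FF_empty_right, FF_empty_left, smul_eq_mul, mul_one, fSS]
  rfl
end
end

section
/- For all z ∈ ℂ and generic tuples ū (length n), v̄ (length m), the modified Izergin determinant has the partition expansion K^{(z)}_{n,m}(ū | v̄) = Σ_{v̄ ⇒ {v̄_I, v̄_II}} (−z)^{#v̄_II} f(ū, v̄_I) f(v̄_I, v̄_II), and the conjugated one satisfies \bar{K}^{(z)}_{n,m}(ū | v̄) = Σ_{v̄ ⇒ {v̄_I, v̄_II}} (−z)^{#v̄_II} f(v̄_I, ū) f(v̄_II, v̄_I), where the sums run over all partitions of v̄ into two disjoint subtuples. -/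
open scoped BigOperators

noncomputable section

/-- Cauchy determinant, `Fin` version. -/
theorem cauchy_fin (c : ℂ) (hc : c ≠ 0) : ∀ (n : ℕ) (w : Fin n → ℂ),
    (∀ i j, i ≠ j → w i - w j ≠ 0) → (∀ i j, w i - w j + c ≠ 0) →
    Matrix.det (Matrix.of fun i j => c / (w i - w j + c)) =
      ∏ i, ∏ j, (if i = j then 1 else (w i - w j) / (w i - w j + c)) := by
  intro n
  induction n with
  | zero => intro w _ _; simp
  | succ n ih =>
    intro w h0 h1
    have key : Matrix.det (Matrix.of fun i j => c / (w i - w j + c)) =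
        Matrix.det (Matrix.of fun i j : Fin (n + 1) =>
          if i = 0 then c / (w i - w j + c) else
            c / (w i - w j + c) - (c / (w i - w 0 + c)) * (c / (w 0 - w j + c))) := by
      apply Matrix.det_eq_of_forall_row_eq_smul_add_const
        (fun i => if i = 0 then 0 else c / (w i - w 0 + c)) 0 (by simp)
      intro i j
      by_cases hi : i = 0
      · simp [hi]
      · simp [hi]
    rw [key, Matrix.det_succ_column_zero, Fin.sum_univ_succ]
    have hz : ∀ i : Fin n, c / (w i.succ - w 0 + c)
        - c / (w i.succ - w 0 + c) * (c / (w 0 - w 0 + c)) = 0 := by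
      intro i
      simp [hc]
    have hsub : (Matrix.of fun i j : Fin n =>
          c / (w i.succ - w j.succ + c)
            - (c / (w i.succ - w 0 + c)) * (c / (w 0 - w j.succ + c))) =
        Matrix.of fun i j : Fin n => ((w i.succ - w 0) / (w i.succ - w 0 + c)) *
          ((Matrix.of fun i j : Fin n => ((w 0 - w j.succ) / (w 0 - w j.succ + c)) *
            ((Matrix.of fun i j : Fin n => c / (w i.succ - w j.succ + c)) i j)) i j) := by
      ext i j
      have a := h1 i.succ j.succ
      have b := h1 i.succ 0
      have d := h1 0 j.succ
      simp only [Matrix.of_apply]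
      field_simp
      ring
    have hs : Matrix.submatrix (Matrix.of fun i j : Fin (n + 1) =>
          if i = 0 then c / (w i - w j + c) else
            c / (w i - w j + c) - (c / (w i - w 0 + c)) * (c / (w 0 - w j + c)))
          (Fin.succAbove 0) Fin.succ = Matrix.of fun i j : Fin n =>
          c / (w i.succ - w j.succ + c)
            - (c / (w i.succ - w 0 + c)) * (c / (w 0 - w j.succ + c)) := by
      ext i j
      simp
    rw [hs, hsub, Matrix.det_mul_column, Matrix.det_mul_row,
      ih (fun i => w i.succ) (fun i j hij => h0 _ _ (by simpa using hij)) (fun i j => h1 _ _)]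
    simp only [Matrix.of_apply, Fin.succ_ne_zero, if_false, hz, Fin.prod_univ_succ,
      Fin.succ_inj, (Fin.succ_ne_zero _).symm, if_true, Finset.prod_mul_distrib]
    simp [hc]

/-- Cauchy determinant over any finite index type. -/
theorem cauchy_gen (c : ℂ) (hc : c ≠ 0) {κ : Type*} [Fintype κ] [DecidableEq κ] (w : κ → ℂ)
    (h0 : ∀ i j, i ≠ j → w i - w j ≠ 0) (h1 : ∀ i j, w i - w j + c ≠ 0) :
    Matrix.det (Matrix.of fun i j => c / (w i - w j + c)) =
      ∏ i, ∏ j, (if i = j then 1 else (w i - w j) / (w i - w j + c)) := by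
  have e := (Fintype.equivFin κ).symm
  rw [← Matrix.det_submatrix_equiv_self e]
  have := cauchy_fin c hc _ (fun i => w (e i)) (fun i j hij => h0 _ _ (by simpa using hij))
    (fun i j => h1 _ _)
  refine Eq.trans this ?_
  rw [← Equiv.prod_comp e]
  refine Finset.prod_congr rfl fun i _ => ?_
  rw [← Equiv.prod_comp e]
  simp

/-- Expansion of `det (-z + A)` in principal minors. -/
theorem det_expand {κ : Type*} [Fintype κ] [DecidableEq κ] (z : ℂ) (A : Matrix κ κ ℂ) :
    Matrix.det (Matrix.of fun j k : κ => -z * (if j = k then 1 else 0) + A j k) =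
      ∑ s : Finset κ, (-z) ^ sᶜ.card *
        (A.submatrix (fun i : s => (i : κ)) (fun i : s => (i : κ))).det := by
  have h := (Matrix.detRowAlternating (n := κ) (R := ℂ)).toMultilinearMap.map_add_univ
    (fun i => A i) (fun i j => -z * (if i = j then 1 else 0))
  have h2 : (Matrix.of fun j k : κ => -z * (if j = k then 1 else 0) + A j k) =
      (Matrix.of ((fun i => A i) + (fun i j => -z * (if i = j then 1 else 0)))) := by
    ext i j
    simp [add_comm]
  rw [h2]
  refine Eq.trans h ?_
  refine Finset.sum_congr rfl fun s _ => ?_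
  rw [← Matrix.det_piecewise_one_eq_submatrix_det]
  have h3 := (Matrix.detRowAlternating (n := κ) (R := ℂ)).toMultilinearMap.map_piecewise_smul
    (fun _ => -z) (s.piecewise A.row (1 : Matrix κ κ ℂ).row) sᶜ
  rw [Finset.prod_const] at h3
  refine Eq.trans ?_ h3
  congr 1
  ext i j
  by_cases hi : i ∈ s <;> simp [hi, Finset.piecewise, Matrix.row, Matrix.one_apply]

theorem izergin_main (c : ℂ) (hc : c ≠ 0) (z : ℂ) (n m : ℕ)
    (u : Fin n → ℂ) (v : Fin m → ℂ)
    (h0 : ∀ i j, i ≠ j → v i - v j ≠ 0) (h1 : ∀ i j, v i - v j + c ≠ 0) :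
    KIz c z u v
        = ∑ s : Finset (Fin m),
            (-z) ^ sᶜ.card * (∏ i, ∏ j ∈ s, fC c (u i) (v j)) *
              (∏ i ∈ s, ∏ j ∈ sᶜ, fC c (v i) (v j)) := by
  unfold KIz
  have hx := det_expand z (Matrix.of fun j k : Fin m =>
      (∏ i, fC c (u i) (v j)) * (∏ i ∈ Finset.univ.erase j, fC c (v j) (v i))
        / hC c (v j) (v k))
  refine Eq.trans hx ?_
  refine Finset.sum_congr rfl fun s _ => ?_
  rw [mul_assoc]
  congr 1
  have hm : (Matrix.submatrix (Matrix.of fun j k : Fin m =>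
      (∏ i, fC c (u i) (v j)) * (∏ i ∈ Finset.univ.erase j, fC c (v j) (v i))
        / hC c (v j) (v k)) (fun i : s => (i : Fin m)) (fun i : s => (i : Fin m))) =
      Matrix.of fun j k : s => ((∏ i, fC c (u i) (v j)) *
        (∏ i ∈ Finset.univ.erase (j : Fin m), fC c (v j) (v i))) *
        ((Matrix.of fun j k : s => c / (v j - v k + c)) j k) := by
    ext j k
    simp [hC, div_eq_mul_inv]
  rw [hm, Matrix.det_mul_column, cauchy_gen c hc (fun i : s => v i)
    (fun i j hij => h0 _ _ (fun h => hij (Subtype.ext h))) (fun i j => h1 _ _)]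
  rw [Finset.prod_mul_distrib, mul_assoc, ← Finset.prod_mul_distrib]
  congr 1
  · rw [Finset.prod_comm]
    refine Finset.prod_congr rfl fun i _ => ?_
    exact Finset.prod_coe_sort s (fun j => fC c (u i) (v j))
  · rw [← Finset.prod_coe_sort s (fun i => ∏ j ∈ sᶜ, fC c (v i) (v j))]
    refine Finset.prod_congr rfl fun i _ => ?_
    have e1 : ∏ j : s, (if i = j then 1 else (v i - v j) / (v i - v j + c)) =
        ∏ j ∈ s.erase i, (fC c (v i) (v j))⁻¹ := by
      have hb := Finset.prod_coe_sort s
        (fun j => if (i : Fin m) = j then (1 : ℂ) else (v i - v j) / (v i - v j + c))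
      simp only [Subtype.ext_iff]
      rw [hb, ← Finset.mul_prod_erase s _ i.2, if_pos rfl, one_mul]
      refine Finset.prod_congr rfl fun j hj => ?_
      rw [if_neg (Finset.ne_of_mem_erase hj).symm, fC, inv_div]
    have e2 : Finset.univ.erase (i : Fin m) = s.erase i ∪ sᶜ := by
      ext j
      have := i.2
      by_cases hj : j = i <;> by_cases hs : j ∈ s <;> simp_all
    have e3 : Disjoint (s.erase (i : Fin m)) sᶜ := by
      rw [Finset.disjoint_left]
      intro j hj hj'
      simp_all
    rw [e1, e2, Finset.prod_union e3, mul_right_comm, ← Finset.prod_mul_distrib]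
    rw [Finset.prod_eq_one, one_mul]
    intro j hj
    apply mul_inv_cancel₀
    exact div_ne_zero (h1 _ _) (h0 _ _ (Finset.ne_of_mem_erase hj).symm)

/-- Partition expansion of the modified Izergin determinant over partitions of `v̄`. -/
theorem stmt11
    (c : ℂ) (hc : c ≠ 0) (z : ℂ) (n m : ℕ)
    (u : Fin n → ℂ) (v : Fin m → ℂ)
    (hgen : Generic c (Fin.append u v)) :
    KIz c z u v
        = ∑ s : Finset (Fin m),
            (-z) ^ sᶜ.card * (∏ i, ∏ j ∈ s, fC c (u i) (v j)) *
              (∏ i ∈ s, ∏ j ∈ sᶜ, fC c (v i) (v j)) ∧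
      KIzBar c z u v
        = ∑ s : Finset (Fin m),
            (-z) ^ sᶜ.card * (∏ j ∈ s, ∏ i, fC c (v j) (u i)) *
              (∏ i ∈ sᶜ, ∏ j ∈ s, fC c (v i) (v j)) := by
  have h0 : ∀ i j, i ≠ j → v i - v j ≠ 0 := by
    intro i j hij
    have := (hgen (Fin.natAdd n i) (Fin.natAdd n j) (by simpa using hij)).1
    simpa using this
  have h1 : ∀ i j, v i - v j + c ≠ 0 := by
    intro i j
    by_cases hij : i = j
    · simpa [hij] using hc
    · have := (hgen (Fin.natAdd n i) (Fin.natAdd n j) (by simpa using hij)).2.2.1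
      simp only [Fin.append_right] at this
      exact fun h => this (eq_neg_of_add_eq_zero_left h)
  have hneg : ∀ a b, fC (-c) a b = fC c b a := by
    intro a b
    unfold fC
    rw [← neg_div_neg_eq]
    congr 1 <;> ring
  refine ⟨izergin_main c hc z n m u v h0 h1, ?_⟩
  unfold KIzBar
  rw [izergin_main (-c) (neg_ne_zero.mpr hc) z n m u v h0 (fun i j h => h1 j i (by
    linear_combination -h))]
  refine Finset.sum_congr rfl fun s _ => ?_
  simp only [hneg]
  congr 1
  · congr 1
    exact Finset.prod_comm
  · exact Finset.prod_comm
end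
end
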